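/- arXiv:math/0509501 — 3 statements merged into one kernel-verified Lean document; each statement's English description precedes it below -/
import Mathlib

section
/- Let A be a finite-dimensional hereditary algebra over an algebraically closed field k, and let Ā = [[A,0],[DA,A]] be its duplicated algebra (the triangular matrix algebra with DA = Hom_k(A,k) as an A-A-bimodule). Then for the idempotent e' = [[0,0],[0,1]], the right Ā-module e'Ā is both projective and injective; more precisely, for each vertex x of the quiver of A, the indecomposable projective Ā-module P̄_{x'} at the vertex x' is isomorphic to the indecomposable injective Ā-module Ī_x, having simple socle S_x and simple top S_{x'}. -/
/-!
Write `Ā` for the duplicated algebra; its elements are triples `(a, b, q)` with `a, b ∈ A` and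
`q ∈ DA`, and `e'Ā = {(0, b, q)}`.

*Projectivity and injectivity of `e'Ā`.*  Since `e'` is idempotent, `e'Ā` is a direct summand of
`Ā`.  The isomorphism `e'Ā ≅ D(Āe)` is used in the form `Hom_Ā(M, e'Ā) ≅ Hom_k(Me, k)`, natural in
`M`: a homomorphism `g` yields the functional `m ↦ q(1)` where `g m = (0, b, q)`, and a functional
`l` on `M` yields the homomorphism `homOfFunctional l` whose value at `m` is the triple `(0, b, q)`
with `q(a) = l(m·(a,0,0))` and `q'(b) = l(m·(0,0,q'))` for all `q' ∈ DA`; such a `b` exists because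
`A` is finite dimensional.  Injectivity of `e'Ā` is then the possibility of extending `k`-linear
functionals from a subspace.

*The vertices.*  Let `p : P → S_{x'}` be a projective cover.  A generator `s₀` of the simple module
gives an epimorphism `π : e'Ā → S_{x'}`, which lifts to `h : e'Ā → P`; as `ker p` is superfluous,
`h` is onto, hence `P` is a summand of `e'Ā` and so is injective.  A functional on `S` which does
not vanish at `s₀` gives `ψ : S_x → e'Ā`, and `h ∘ ψ ≠ 0`: for a section `σ` of `h`, `σ ∘ h` is left
multiplication by `σ(h e') = (0, a, _)` with `s₀ a = s₀`, so that `σ(h(ψ s₀))` sends `1` to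
`l(s₀ a) = l(s₀) ≠ 0`.  So the simple module `S_x` embeds into the injective module `P`, and this
embedding extends to a split monomorphism `I → P` from the injective envelope `I` of `S_x`.  As `P`
has a simple top, it is indecomposable, whence `I ≅ P`.
-/

open TrivSqZeroExt Module CategoryTheory

universe u

section Gen
variable (R : Type u) [Ring R]

/-- A module is indecomposable: nonzero and admitting no nontrivial direct sum decomposition. -/
def Indec (M : ModuleCat.{u} R) : Prop :=
  (⊥ : Submodule R M) ≠ ⊤ ∧ ∀ U V : Submodule R M, IsCompl U V → U = ⊥ ∨ V = ⊥

/-- projective dimension at most `n` -/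
def PDimLE : ℕ → ModuleCat.{u} R → Prop
  | 0, M => Module.Projective R M
  | (n+1), M => ∃ (P : ModuleCat.{u} R) (g : P →ₗ[R] M), Module.Projective R P ∧
      Function.Surjective g ∧ PDimLE n (ModuleCat.of R (LinearMap.ker g))

/-- injective dimension at most 1 -/
def IDimLE1 (M : ModuleCat.{u} R) : Prop :=
  ∃ (I : ModuleCat.{u} R) (f : M →ₗ[R] I), Module.Injective R I ∧ Function.Injective f ∧
    Module.Injective R ((I : Type u) ⧸ LinearMap.range f)

/-- one step in a path: a nonzero morphism between indecomposables -/
def NZHom (M N : ModuleCat.{u} R) : Prop :=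
  Indec R M ∧ Indec R N ∧ ∃ f : M →ₗ[R] N, f ≠ 0

/-- there is a path of nonzero morphisms between indecomposables from `M` to `N` -/
def IsPath (M N : ModuleCat.{u} R) : Prop :=
  Indec R M ∧ Indec R N ∧ Relation.ReflTransGen (NZHom R) M N

/-- `M` lies in the left part `L` of the module category -/
def InLeftPart (M : ModuleCat.{u} R) : Prop :=
  Indec R M ∧ ∀ L : ModuleCat.{u} R, IsPath R L M → PDimLE R 1 L

/-- `M` lies in the right part `R` of the module category -/
def InRightPart (M : ModuleCat.{u} R) : Prop :=
  Indec R M ∧ ∀ N : ModuleCat.{u} R, IsPath R M N → IDimLE1 R N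

/-- Ext¹(Z,Y) = 0: every short exact sequence 0 → Y → E → Z → 0 splits. -/
def Ext1Vanish (Z Y : ModuleCat.{u} R) : Prop :=
  ∀ (E : ModuleCat.{u} R) (f : Y →ₗ[R] E) (g : E →ₗ[R] Z),
    Function.Injective f → Function.Surjective g → Function.Exact f g →
      ∃ s : Z →ₗ[R] E, g.comp s = LinearMap.id

/-- Ext^n(Z,Y) = 0, defined by dimension shifting. -/
def ExtVanish : ℕ → ModuleCat.{u} R → ModuleCat.{u} R → Prop
  | 0, _, _ => True
  | 1, Z, Y => Ext1Vanish R Z Y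
  | (n+2), Z, Y => ∀ (P : ModuleCat.{u} R) (g : P →ₗ[R] Z),
      Module.Projective R P → Function.Surjective g →
        ExtVanish (n+1) (ModuleCat.of R (LinearMap.ker g)) Y

/-- an almost split (Auslander-Reiten) sequence 0 → X → E → Z → 0 -/
def AlmostSplitSeq (X E Z : ModuleCat.{u} R) (f : X →ₗ[R] E) (g : E →ₗ[R] Z) : Prop :=
  Function.Injective f ∧ Function.Surjective g ∧ Function.Exact f g ∧
  Indec R X ∧ Indec R Z ∧
  (¬ ∃ s : Z →ₗ[R] E, g.comp s = LinearMap.id) ∧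
  (∀ (W : ModuleCat.{u} R) (h : W →ₗ[R] Z),
     (¬ ∃ s : Z →ₗ[R] W, h.comp s = LinearMap.id) → ∃ u : W →ₗ[R] E, g.comp u = h)

/-- `N` is an inverse Auslander-Reiten translate `τ⁻¹ M` (realized by an almost split sequence) -/
def IsTauInv (M N : ModuleCat.{u} R) : Prop :=
  ∃ (E : ModuleCat.{u} R) (f : M →ₗ[R] E) (g : E →ₗ[R] N), AlmostSplitSeq R M E N f g

/-- `N` is the Auslander-Reiten translate `τ M` -/
def IsTau (M N : ModuleCat.{u} R) : Prop := IsTauInv R N M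

/-- `f : M → I` is an injective envelope -/
def IsInjEnvelope (M I : ModuleCat.{u} R) (f : M →ₗ[R] I) : Prop :=
  Module.Injective R I ∧ Function.Injective f ∧
    ∀ U : Submodule R I, U ≠ ⊥ → U ⊓ LinearMap.range f ≠ ⊥

/-- `p : P → M` is a projective cover -/
def IsProjCover (P M : ModuleCat.{u} R) (p : P →ₗ[R] M) : Prop :=
  Module.Projective R P ∧ Function.Surjective p ∧
    ∀ U : Submodule R P, U ⊔ LinearMap.ker p = ⊤ → U = ⊤

/-- `N` is a first cosyzygy `Ω⁻¹ M` -/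
def IsCosyzygy (M N : ModuleCat.{u} R) : Prop :=
  ∃ (I : ModuleCat.{u} R) (f : M →ₗ[R] I), IsInjEnvelope R M I f ∧
    Nonempty (N ≃ₗ[R] ((I : Type u) ⧸ LinearMap.range f))

/-- `X` is a direct summand of `Y` -/
def DirectSummand (X Y : ModuleCat.{u} R) : Prop :=
  ∃ (i : X →ₗ[R] Y) (r : Y →ₗ[R] X), r.comp i = LinearMap.id

/-- `M` is projective-injective -/
def ProjInj (M : ModuleCat.{u} R) : Prop := Module.Projective R M ∧ Module.Injective R M

end Gen

section DupAlg
variable (k : Type u) [Field k] (A : Type u) [Ring A] [Algebra k A]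

noncomputable instance dualModL : Module (A × A) (Module.Dual k A) where
  smul p q := q.comp (LinearMap.mulRight k p.2)
  one_smul q := by ext x; show q (x * 1) = q x; simp
  mul_smul p p' q := by ext x; show q (x * (p.2 * p'.2)) = q (x * p.2 * p'.2); rw [mul_assoc]
  smul_zero p := by ext x; rfl
  smul_add p q q' := by ext x; rfl
  add_smul p p' q := by ext x; show q (x * (p.2 + p'.2)) = q (x * p.2) + q (x * p'.2); rw [mul_add, map_add]
  zero_smul q := by ext x; show q (x * 0) = 0; simp

noncomputable instance dualModR : Module (A × A)ᵐᵒᵖ (Module.Dual k A) where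
  smul p q := q.comp (LinearMap.mulLeft k p.unop.1)
  one_smul q := by ext x; show q ((1 : A) * x) = q x; simp
  mul_smul p p' q := by
    ext x
    show q ((p'.unop.1 * p.unop.1) * x) = q (p'.unop.1 * (p.unop.1 * x))
    rw [mul_assoc]
  smul_zero p := by ext x; rfl
  smul_add p q q' := by ext x; rfl
  add_smul p p' q := by
    ext x
    show q ((p.unop.1 + p'.unop.1) * x) = q (p.unop.1 * x) + q (p'.unop.1 * x)
    rw [add_mul, map_add]
  zero_smul q := by ext x; show q ((0 : A) * x) = 0; simp

instance dualSMulComm : SMulCommClass (A × A) (A × A)ᵐᵒᵖ (Module.Dual k A) where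
  smul_comm p p' q := by
    ext x
    show q (p'.unop.1 * (x * p.2)) = q ((p'.unop.1 * x) * p.2)
    rw [mul_assoc]

/-- The duplicated algebra Ā = [[A,0],[DA,A]] of `A`, realized as the trivial extension
of `A × A` by the bimodule `DA = Hom_k(A,k)`. -/
abbrev Dup := TrivSqZeroExt (A × A) (Module.Dual k A)

/-- the canonical surjection Ā → A onto the first diagonal copy of A -/
noncomputable def dupProj₁ : Dup k A →+* A where
  toFun x := x.fst.1
  map_one' := rfl
  map_mul' x y := by simp
  map_zero' := rfl
  map_add' x y := by simp

/-- the canonical surjection Ā → A onto the second diagonal copy of A -/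
noncomputable def dupProj₂ : Dup k A →+* A where
  toFun x := x.fst.2
  map_one' := rfl
  map_mul' x y := by simp
  map_zero' := rfl
  map_add' x y := by simp

/-- Right modules over a ring are left modules over its opposite; this is the
restriction functor from right A-modules to right Ā-modules along Ā → A (first copy),
that is, the standard embedding mod A ↪ mod Ā. -/
noncomputable abbrev resA : ModuleCat.{u} Aᵐᵒᵖ ⥤ ModuleCat.{u} (Dup k A)ᵐᵒᵖ :=
  ModuleCat.restrictScalars (RingHom.op (dupProj₁ k A))

/-- restriction along the second projection Ā → A' -/
noncomputable abbrev resA' : ModuleCat.{u} Aᵐᵒᵖ ⥤ ModuleCat.{u} (Dup k A)ᵐᵒᵖ :=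
  ModuleCat.restrictScalars (RingHom.op (dupProj₂ k A))

/-- a right Ā-module "belongs to mod A": the kernel of Ā → A acts as zero,
i.e. it is the restriction of an A-module along the first projection. -/
def ActsThroughA (M : ModuleCat.{u} (Dup k A)ᵐᵒᵖ) : Prop :=
  ∀ x : Dup k A, x.fst.1 = 0 → ∀ m : M, (MulOpposite.op x) • m = 0

/-- a right Ā-module is the restriction of an A'-module along the second projection. -/
def ActsThroughA' (M : ModuleCat.{u} (Dup k A)ᵐᵒᵖ) : Prop :=
  ∀ x : Dup k A, x.fst.2 = 0 → ∀ m : M, (MulOpposite.op x) • m = 0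

/-- the idempotent e' of Ā -/
noncomputable def eDup' : Dup k A := TrivSqZeroExt.inl ((0, 1) : A × A)

/-- the right ideal e'Ā of Ā, as a right Ā-module -/
noncomputable def eDupMod : ModuleCat.{u} (Dup k A)ᵐᵒᵖ :=
  ModuleCat.of (Dup k A)ᵐᵒᵖ (Submodule.span (Dup k A)ᵐᵒᵖ {eDup' k A})

/-- a ring is (left) hereditary: every (left) ideal is projective. Applied to `Aᵐᵒᵖ`
this says that `A` is right hereditary. -/
def IsHereditaryRing (B : Type u) [Ring B] : Prop :=
  ∀ I : Submodule B B, Module.Projective B I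

end DupAlg

section Gen2
variable (R : Type u) [Ring R]

/-- `f` is a split monomorphism (section) -/
def IsSplitMonoL {X Y : ModuleCat.{u} R} (f : X →ₗ[R] Y) : Prop :=
  ∃ r : Y →ₗ[R] X, r.comp f = LinearMap.id

/-- `f` is a split epimorphism (retraction) -/
def IsSplitEpiL {X Y : ModuleCat.{u} R} (f : X →ₗ[R] Y) : Prop :=
  ∃ s : Y →ₗ[R] X, f.comp s = LinearMap.id

/-- `f` is an irreducible morphism -/
def IrreducibleHom {X Y : ModuleCat.{u} R} (f : X →ₗ[R] Y) : Prop :=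
  ¬ IsSplitMonoL R f ∧ ¬ IsSplitEpiL R f ∧
  ∀ (W : ModuleCat.{u} R) (g : X →ₗ[R] W) (h : W →ₗ[R] Y), h.comp g = f →
    IsSplitMonoL R g ∨ IsSplitEpiL R h

/-- a path `M = M₀ → M₁ → ⋯ → M_t = N` of nonzero morphisms between indecomposables,
recorded with its data -/
structure MPath (M N : ModuleCat.{u} R) where
  len : ℕ
  obj : Fin (len + 1) → ModuleCat.{u} R
  hom : ∀ i : Fin len, obj i.castSucc →ₗ[R] obj i.succ
  indec : ∀ i, Indec R (obj i)
  nonzero : ∀ i, hom i ≠ 0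
  first : obj 0 = M
  last : obj (Fin.last len) = N

/-- the path consists of irreducible morphisms -/
def MPath.IsIrr {M N : ModuleCat.{u} R} (p : MPath R M N) : Prop :=
  ∀ i, IrreducibleHom R (p.hom i)

/-- the path is sectional: `τ M_{i+1} ≇ M_{i-1}` for all `i` -/
def MPath.Sectional {M N : ModuleCat.{u} R} (p : MPath R M N) : Prop :=
  ∀ (i : ℕ) (h : i + 2 ≤ p.len),
    ¬ IsTau R (p.obj ⟨i + 2, by omega⟩) (p.obj ⟨i, by omega⟩)

/-- `q` is a refinement of `p`: a longer path passing through the modules of `p` in order -/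
def MPath.Refines {M N : ModuleCat.{u} R} (q p : MPath R M N) : Prop :=
  ∃ σ : Fin (p.len + 1) → Fin (q.len + 1), StrictMono σ ∧
    σ 0 = 0 ∧ σ (Fin.last p.len) = Fin.last q.len ∧ ∀ i, q.obj (σ i) = p.obj i

/-- `M` is an indecomposable Ext-injective object of `add L` (the additive closure of the
left part): it is in the left part and `Ext¹(X, M) = 0` for every `X` in the left part -/
def ExtInjLeft (M : ModuleCat.{u} R) : Prop :=
  InLeftPart R M ∧ ∀ X : ModuleCat.{u} R, InLeftPart R X → Ext1Vanish R X M

/-- `T` is multiplicity-free: no indecomposable occurs twice as a direct summand -/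
def MultFree (T : ModuleCat.{u} R) : Prop :=
  ∀ X : ModuleCat.{u} R, Indec R X →
    ¬ DirectSummand R (ModuleCat.of R (Prod (X : Type u) (X : Type u))) T

/-- `X` belongs to `add T` -/
def InAdd (T X : ModuleCat.{u} R) : Prop :=
  ∃ n : ℕ, DirectSummand R X (ModuleCat.of R (Fin n → (T : Type u)))

/-- `M` admits a coresolution of length `n` by modules in `add T` -/
def CoresolvedBy (T : ModuleCat.{u} R) : ℕ → ModuleCat.{u} R → Prop
  | 0, M => InAdd R T M
  | (n+1), M => ∃ (T₀ : ModuleCat.{u} R) (f : M →ₗ[R] T₀), InAdd R T T₀ ∧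
      Function.Injective f ∧
      CoresolvedBy T n (ModuleCat.of R ((T₀ : Type u) ⧸ LinearMap.range f))

/-- `T` is a (generalized) tilting module: finite projective dimension, no self-extensions
in positive degrees, and the regular module has a finite coresolution in `add T` -/
def IsTiltingModule (T : ModuleCat.{u} R) : Prop :=
  (∃ n, PDimLE R n T) ∧ (∀ i, 0 < i → ExtVanish R i T T) ∧
  (∃ n, CoresolvedBy R T n (ModuleCat.of R R))

/-- `X` lies in the additive closure of the class `P` of modules -/
def InAddOf (P : ModuleCat.{u} R → Prop) (X : ModuleCat.{u} R) : Prop :=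
  ∃ (n : ℕ) (D : Fin n → ModuleCat.{u} R), (∀ i, P (D i)) ∧
    DirectSummand R X (ModuleCat.of R ((i : Fin n) → (D i : Type u)))

/-- the additive closure of the class `P` is contravariantly finite: every finitely
generated module has a right `add P`-approximation -/
def ContravariantlyFinite (P : ModuleCat.{u} R → Prop) : Prop :=
  ∀ M : ModuleCat.{u} R, Module.Finite R M →
    ∃ (X : ModuleCat.{u} R) (f : X →ₗ[R] M), InAddOf R P X ∧
      ∀ (X' : ModuleCat.{u} R) (g : X' →ₗ[R] M), InAddOf R P X' →
        ∃ h : X' →ₗ[R] X, f.comp h = g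

/-- the additive closure of the class `P` is covariantly finite: every finitely
generated module has a left `add P`-approximation -/
def CovariantlyFinite (P : ModuleCat.{u} R → Prop) : Prop :=
  ∀ M : ModuleCat.{u} R, Module.Finite R M →
    ∃ (X : ModuleCat.{u} R) (f : M →ₗ[R] X), InAddOf R P X ∧
      ∀ (X' : ModuleCat.{u} R) (g : M →ₗ[R] X'), InAddOf R P X' →
        ∃ h : X →ₗ[R] X', h.comp f = g

/-- isomorphism of simple modules, as a setoid -/
def simpleIsoSetoid : Setoid {S : ModuleCat.{u} R // IsSimpleModule R S} where
  r S T := Nonempty (S.1 ≃ₗ[R] T.1)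
  iseqv := ⟨fun S => ⟨LinearEquiv.refl _ _⟩,
    fun ⟨e⟩ => ⟨e.symm⟩, fun ⟨e⟩ ⟨f⟩ => ⟨e.trans f⟩⟩

/-- the number of isomorphism classes of simple `R`-modules (the rank of `K₀(R)`
for a finite dimensional algebra `R`) -/
noncomputable def NumSimples : ℕ := Nat.card (Quotient (simpleIsoSetoid R))

/-- the algebra is representation-finite -/
def RepFinite : Prop :=
  ∃ (n : ℕ) (Ls : Fin n → ModuleCat.{u} R), ∀ M : ModuleCat.{u} R,
    Module.Finite R M → Indec R M → ∃ i, Nonempty (M ≃ₗ[R] Ls i)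

/-- the algebra is laura: only finitely many indecomposables lie outside `L ∪ R` -/
def LauraAlg : Prop :=
  ∃ (n : ℕ) (Ls : Fin n → ModuleCat.{u} R), ∀ M : ModuleCat.{u} R,
    Module.Finite R M → Indec R M → ¬ InLeftPart R M → ¬ InRightPart R M →
      ∃ i, Nonempty (M ≃ₗ[R] Ls i)

end Gen2

section Cat
variable (C : Type u) [Category.{u} C] [Preadditive C] [Limits.HasBinaryBiproducts C]

/-- an object of an additive category is indecomposable -/
def IndecObjC (X : C) : Prop :=
  ¬ Limits.IsZero X ∧ ∀ Y Z : C, Nonempty (X ≅ Y ⊞ Z) →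
    Limits.IsZero Y ∨ Limits.IsZero Z

end Cat

instance restrictScalarsAdditive {R S : Type u} [Ring R] [Ring S] (f : R →+* S) :
    (ModuleCat.restrictScalars.{u} f).Additive where
  map_add := rfl

open MulOpposite

/-! ### Retracts, projective covers and injective envelopes over a ring -/

section GeneralModules
variable {R : Type u} [Ring R]

theorem injective_of_retract {M N : Type u} [AddCommGroup M] [Module R M] [AddCommGroup N]
    [Module R N] (hM : Module.Injective R M) (s : N →ₗ[R] M) (r : M →ₗ[R] N)
    (h : r.comp s = LinearMap.id) : Module.Injective R N := by
  constructor
  intro X Y _ _ _ _ f hf g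
  obtain ⟨t, ht⟩ := hM.out f hf (s.comp g)
  refine ⟨r.comp t, fun x => ?_⟩
  have := LinearMap.congr_fun h (g x)
  simp only [LinearMap.comp_apply, LinearMap.id_apply] at this ⊢
  rw [ht]
  exact this

/-- A projective cover of a simple module is indecomposable: in a decomposition `P = U ⊕ V` one of
the summands already maps onto the simple module. -/
theorem indecomposable_of_projCover {P T : ModuleCat.{u} R} [IsSimpleModule R T]
    {p : P →ₗ[R] T} (hp : IsProjCover R P T p) (U V : Submodule R P) (hUV : IsCompl U V) :
    U = ⊤ ∨ V = ⊤ := by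
  have key : ∀ W : Submodule R P, W.map p = ⊤ → W = ⊤ := by
    intro W hW
    apply hp.2.2
    rw [← Submodule.comap_map_eq, hW, Submodule.comap_top]
  rcases eq_bot_or_eq_top (U.map p) with hU | hU
  · right
    apply key
    have h : (U ⊔ V).map p = ⊤ := by
      rw [hUV.sup_eq_top, Submodule.map_top, LinearMap.range_eq_top.mpr hp.2.1]
    rwa [Submodule.map_sup, hU, bot_sup_eq] at h
  · exact Or.inl (key U hU)

/-- If the simple module `T` has a nonzero map to an injective module `P` all of whose
decompositions are trivial, then `P` is isomorphic to the injective envelope of `T`. -/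
theorem equiv_of_injEnvelope {T I : ModuleCat.{u} R} [IsSimpleModule R T] {i : T →ₗ[R] I}
    (hi : IsInjEnvelope R T I i) {P : Type u} [AddCommGroup P] [Module R P]
    (hP : Module.Injective R P)
    (hindec : ∀ U V : Submodule R P, IsCompl U V → U = ⊤ ∨ V = ⊤)
    (j : T →ₗ[R] P) (hj : j ≠ 0) : Nonempty (P ≃ₗ[R] I) := by
  have hjinj : Function.Injective j := (LinearMap.injective_or_eq_zero j).resolve_right hj
  obtain ⟨h, hh⟩ := hP.out i hi.2.1 j
  -- `I` is an essential extension of `T` and `h` is injective on `T`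
  have hinj : Function.Injective h := by
    rw [← LinearMap.ker_eq_bot]
    by_contra hk
    apply hi.2.2 _ hk
    rw [eq_bot_iff]
    rintro x ⟨hx, t, rfl⟩
    have hx' : h (i t) = 0 := hx
    rw [hh] at hx'
    have ht : t = 0 := hjinj (by rw [hx', map_zero])
    simp [ht]
  obtain ⟨r, hr⟩ := hi.1.out h hinj LinearMap.id
  have hc : IsCompl (LinearMap.range h) (LinearMap.ker r) := by
    have hker : LinearMap.ker (h.rangeRestrict.comp r) = LinearMap.ker r := by
      apply LinearMap.ker_comp_of_ker_eq_bot
      rw [LinearMap.ker_rangeRestrict]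
      exact LinearMap.ker_eq_bot.mpr hinj
    rw [← hker]
    apply LinearMap.isCompl_of_proj
    rintro ⟨_, y, rfl⟩
    ext
    simp [hr]
  rcases hindec _ _ hc with ht | ht
  · exact ⟨(LinearEquiv.ofBijective h ⟨hinj, LinearMap.range_eq_top.mp ht⟩).symm⟩
  · exfalso
    apply hj
    ext t
    have hz : r (h (i t)) = 0 := by
      have : h (i t) ∈ LinearMap.ker r := ht ▸ Submodule.mem_top
      exact this
    rw [hr] at hz
    have hz' : i t = 0 := hz
    rw [← hh, hz', map_zero]
    rfl

end GeneralModules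

/-! ### The duplicated algebra and the right ideal `e'Ā` -/

section DuplicatedAlgebra
variable {k : Type u} [Field k] {A : Type u} [Ring A] [Algebra k A]

theorem dual_smul_apply (p : A × A) (q : Module.Dual k A) (x : A) : (p • q) x = q (x * p.2) := rfl

theorem dual_op_smul_apply (p : (A × A)ᵐᵒᵖ) (q : Module.Dual k A) (x : A) :
    (p • q) x = q (p.unop.1 * x) := rfl

/-- The ring homomorphism `k → Āᵒᵖ` through which right `Ā`-modules become vector spaces. -/
noncomputable def scalarHom (k : Type u) [Field k] (A : Type u) [Ring A] [Algebra k A] :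
    k →+* (Dup k A)ᵐᵒᵖ where
  toFun c := op (inl (algebraMap k A c, algebraMap k A c))
  map_one' := by simp [← Prod.one_eq_mk]
  map_mul' x y := by
    rw [← op_mul, TrivSqZeroExt.inl_mul_inl, mul_comm x y]
    simp
  map_zero' := by simp [← Prod.zero_eq_mk]
  map_add' x y := by
    rw [← MulOpposite.op_add, ← TrivSqZeroExt.inl_add]
    simp

theorem scalarHom_apply (c : k) :
    scalarHom k A c = op (inl (algebraMap k A c, algebraMap k A c)) := rfl

theorem eDup'_mul (x : Dup k A) : eDup' k A * x = inl (0, x.fst.2) + inr x.snd := by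
  apply TrivSqZeroExt.ext
  · ext <;> simp [eDup']
  · ext a
    simp [eDup', dual_smul_apply]

theorem mem_eDup'_span (x : Dup k A) :
    x ∈ Submodule.span (Dup k A)ᵐᵒᵖ {eDup' k A} ↔ x.fst.1 = 0 := by
  rw [Submodule.mem_span_singleton]
  constructor
  · rintro ⟨y, rfl⟩
    rw [MulOpposite.smul_eq_mul_unop, eDup'_mul]
    simp
  · intro h
    refine ⟨op x, ?_⟩
    rw [op_smul_eq_mul, eDup'_mul]
    apply TrivSqZeroExt.ext
    · ext <;> simp [h]
    · simp


/-- The component in `DA` of an element of `e'Ā`, evaluated at `1`.  This functional exhibits `e'Ā`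
as the dual of `Āe`. -/
noncomputable def evalOne : eDupMod k A →+ k where
  toFun x := x.1.snd 1
  map_zero' := rfl
  map_add' _ _ := rfl

theorem eDupMod_smul_val (y : Dup k A) (x : eDupMod k A) : (op y • x).1 = x.1 * y := rfl

theorem eDupMod_fst (x : eDupMod k A) : x.1.fst.1 = 0 := (mem_eDup'_span x.1).mp x.2

theorem evalOne_smul_inl (x : eDupMod k A) (a c : A) :
    evalOne (op (inl (a, c) : Dup k A) • x) = x.1.snd a := by
  change (x.1 * inl (a, c)).snd 1 = _
  simp [dual_op_smul_apply]

theorem evalOne_smul_inr (x : eDupMod k A) (q : Module.Dual k A) :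
    evalOne (op (inr q : Dup k A) • x) = q x.1.fst.2 := by
  change (x.1 * inr q).snd 1 = _
  simp [dual_smul_apply]

/-! ### Functionals on `M` and homomorphisms `M → e'Ā` -/

section Functionals
variable {M : Type u} [AddCommGroup M] [Module (Dup k A)ᵐᵒᵖ M]

/-- `k`-linearity of an additive functional on a right `Ā`-module, for the structure of a vector
space given by `scalarHom`. -/
def ScalarLinear (l : M →+ k) : Prop := ∀ (c : k) (m : M), l (scalarHom k A c • m) = c * l m

theorem smul_inl_scalar (l : M →+ k) (hl : ScalarLinear (A := A) l) (c : k) (a b : A) (m : M) :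
    l (op (inl (c • a, c • b) : Dup k A) • m) = c * l (op (inl (a, b) : Dup k A) • m) := by
  rw [← hl, smul_smul, scalarHom_apply, ← MulOpposite.op_mul, TrivSqZeroExt.inl_mul_inl]
  simp [Algebra.smul_def, Algebra.commutes]

theorem smul_inr_scalar (l : M →+ k) (hl : ScalarLinear (A := A) l) (c : k) (q : Module.Dual k A)
    (m : M) : l (op (inr (c • q) : Dup k A) • m) = c * l (op (inr q : Dup k A) • m) := by
  rw [← hl, smul_smul, scalarHom_apply, ← MulOpposite.op_mul]
  congr 3
  apply TrivSqZeroExt.ext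
  · simp
  · ext x
    simp [dual_op_smul_apply, ← Algebra.smul_def]

/-- The functional `a ↦ l (m·(a,0,0))` on `A`. -/
noncomputable def sndPart (l : M →+ k) (hl : ScalarLinear (A := A) l) (m : M) :
    Module.Dual k A where
  toFun a := l (op (inl (a, 0) : Dup k A) • m)
  map_add' a b := by
    rw [← map_add, ← add_smul, ← MulOpposite.op_add, ← TrivSqZeroExt.inl_add]
    simp
  map_smul' c a := by
    have := smul_inl_scalar l hl c a 0 m
    simpa using this

/-- The functional `q ↦ l (m·(0,0,q))` on `DA`. -/
noncomputable def bidualPart (l : M →+ k) (hl : ScalarLinear (A := A) l) (m : M) :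
    Module.Dual k (Module.Dual k A) where
  toFun q := l (op (inr q : Dup k A) • m)
  map_add' a b := by
    rw [← map_add, ← add_smul, ← MulOpposite.op_add, ← TrivSqZeroExt.inr_add]
  map_smul' c q := smul_inr_scalar l hl c q m

variable [FiniteDimensional k A]

/-- The element of `A` representing `q ↦ l (m·(0,0,q))` under `A ≅ DDA`. -/
noncomputable def fstPart (l : M →+ k) (hl : ScalarLinear (A := A) l) (m : M) : A :=
  (Module.evalEquiv k A).symm (bidualPart l hl m)

theorem apply_fstPart (l : M →+ k) (hl : ScalarLinear (A := A) l) (m : M) (q : Module.Dual k A) :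
    q (fstPart l hl m) = l (op (inr q : Dup k A) • m) := by
  rw [fstPart, Module.apply_evalEquiv_symm_apply]
  rfl

theorem dual_ext {a b : A} (h : ∀ q : Module.Dual k A, q a = q b) : a = b :=
  (Module.evalEquiv k A).injective (LinearMap.ext h)

/-- The homomorphism `M → e'Ā` corresponding to a functional on `M` under
`Hom_Ā(M, e'Ā) ≅ Hom_k(Me, k)`. -/
noncomputable def homOfFunctional (l : M →+ k) (hl : ScalarLinear (A := A) l) :
    M →ₗ[(Dup k A)ᵐᵒᵖ] eDupMod k A where
  toFun m := ⟨inl (0, fstPart l hl m) + inr (sndPart l hl m), by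
    rw [mem_eDup'_span]
    simp⟩
  map_add' m n := by
    apply Subtype.ext
    change (inl (0, fstPart l hl (m + n)) + inr (sndPart l hl (m + n)) : Dup k A) =
      (inl (0, fstPart l hl m) + inr (sndPart l hl m)) +
        (inl (0, fstPart l hl n) + inr (sndPart l hl n))
    apply TrivSqZeroExt.ext
    · ext
      · simp
      · apply dual_ext (k := k)
        intro q
        simp [apply_fstPart]
    · ext a
      simp [sndPart]
  map_smul' r m := by
    induction r using MulOpposite.rec' with | _ y =>
    apply Subtype.ext
    change (inl (0, fstPart l hl (op y • m)) + inr (sndPart l hl (op y • m)) : Dup k A) =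
      (inl (0, fstPart l hl m) + inr (sndPart l hl m)) * y
    apply TrivSqZeroExt.ext
    · ext
      · simp
      · apply dual_ext (k := k)
        intro q
        -- both sides are `l (m·(0,0,b'q))` for `y = (a',b',q₀)`
        have h := apply_fstPart l hl m (y.fst • q)
        rw [dual_smul_apply] at h
        have hy : y * inr q = inr (y.fst • q) := by
          apply TrivSqZeroExt.ext <;> simp
        simp only [TrivSqZeroExt.fst_add, TrivSqZeroExt.fst_inl, TrivSqZeroExt.fst_inr, add_zero,
          TrivSqZeroExt.fst_mul, Prod.snd_mul]
        rw [apply_fstPart, smul_smul, ← MulOpposite.op_mul, hy, h]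
    · ext a
      have h := apply_fstPart l hl m (op ((a, 0) : A × A) • y.snd)
      have hy : y * inl (a, 0) = inl (y.fst.1 * a, 0) + inr (op ((a, 0) : A × A) • y.snd) := by
        apply TrivSqZeroExt.ext
        · ext <;> simp
        · simp
      change y.snd (a * fstPart l hl m) = _ at h
      simp only [TrivSqZeroExt.snd_add, TrivSqZeroExt.snd_inl, TrivSqZeroExt.snd_inr, zero_add,
        TrivSqZeroExt.snd_mul, TrivSqZeroExt.fst_add, TrivSqZeroExt.fst_inl,
        TrivSqZeroExt.fst_inr, add_zero, LinearMap.add_apply, dual_smul_apply, dual_op_smul_apply]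
      change l (op (inl (a, 0) : Dup k A) • op y • m) = y.snd (a * fstPart l hl m) +
        l (op (inl (y.fst.1 * a, 0) : Dup k A) • m)
      rw [smul_smul, ← MulOpposite.op_mul, hy, MulOpposite.op_add, add_smul, map_add, ← h,
        add_comm]

theorem homOfFunctional_snd (l : M →+ k) (hl : ScalarLinear (A := A) l) (m : M) (a : A) :
    (homOfFunctional l hl m).1.snd a = l (op (inl (a, 0) : Dup k A) • m) := by
  change (inl (0, fstPart l hl m) + inr (sndPart l hl m) : Dup k A).snd a = _
  simp [sndPart]

theorem homOfFunctional_fst (l : M →+ k) (hl : ScalarLinear (A := A) l) (m : M) :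
    (homOfFunctional l hl m).1.fst.2 = fstPart l hl m := by
  change (inl (0, fstPart l hl m) + inr (sndPart l hl m) : Dup k A).fst.2 = _
  simp

end Functionals

/-! ### Injectivity of `e'Ā` -/

/-- Every functional on a submodule extends: a scalar-linear functional on `X` extends along an
injective homomorphism `X → Y`. -/
theorem exists_extend_functional {X Y : Type u} [AddCommGroup X] [Module (Dup k A)ᵐᵒᵖ X]
    [AddCommGroup Y] [Module (Dup k A)ᵐᵒᵖ Y] (f : X →ₗ[(Dup k A)ᵐᵒᵖ] Y)
    (hf : Function.Injective f) (l : X →+ k) (hl : ScalarLinear (A := A) l) :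
    ∃ l' : Y →+ k, ScalarLinear (A := A) l' ∧ ∀ x, l' (f x) = l x := by
  let : Module k X := Module.compHom X (scalarHom k A)
  let : Module k Y := Module.compHom Y (scalarHom k A)
  let fk : X →ₗ[k] Y :=
    { toFun := f, map_add' := map_add f, map_smul' := fun c x => map_smul f (scalarHom k A c) x }
  let lk : X →ₗ[k] k := { toFun := l, map_add' := map_add l, map_smul' := fun c x => hl c x }
  obtain ⟨g, hg⟩ := LinearMap.exists_leftInverse_of_injective fk (LinearMap.ker_eq_bot.mpr hf)
  refine ⟨(lk.comp g).toAddMonoidHom, fun c y => (lk.comp g).map_smul c y, fun x => ?_⟩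
  exact congrArg l (LinearMap.congr_fun hg x)

theorem exists_functional_ne_zero (X : ModuleCat.{u} (Dup k A)ᵐᵒᵖ) (x : X)
    (hx : x ≠ 0) : ∃ l : X →+ k, ScalarLinear (A := A) l ∧ l x ≠ 0 := by
  let : Module k X := Module.compHom X (scalarHom k A)
  by_contra! h
  exact hx ((Module.forall_dual_apply_eq_zero_iff k x).mp
    fun l => h l.toAddMonoidHom fun c y => l.map_smul c y)

theorem eDupMod_injective [FiniteDimensional k A] :
    Module.Injective (Dup k A)ᵐᵒᵖ (eDupMod k A) := by
  constructor
  intro X Y _ _ _ _ f hf g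
  have hl : ScalarLinear (A := A) ((evalOne (k := k) (A := A)).comp g.toAddMonoidHom) := by
    intro c x
    change evalOne (g (scalarHom k A c • x)) = c * evalOne (g x)
    rw [map_smul, scalarHom_apply, evalOne_smul_inl]
    change _ = c * (g x).1.snd 1
    rw [Algebra.algebraMap_eq_smul_one, map_smul, smul_eq_mul]
  obtain ⟨l, hl', hlf⟩ := exists_extend_functional f hf _ hl
  refine ⟨homOfFunctional l hl', fun x => ?_⟩
  apply Subtype.ext
  apply TrivSqZeroExt.ext
  · apply Prod.ext
    · rw [eDupMod_fst, eDupMod_fst]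
    · rw [homOfFunctional_fst]
      apply dual_ext (k := k)
      intro q
      rw [apply_fstPart, ← map_smul, hlf]
      change evalOne (g (op (inr q) • x)) = _
      rw [map_smul, evalOne_smul_inr]
  · ext a
    rw [homOfFunctional_snd, ← map_smul, hlf]
    change evalOne (g (op (inl (a, 0)) • x)) = _
    rw [map_smul, evalOne_smul_inl]

/-! ### Projectivity of `e'Ā` -/

/-- The generator `e'` of `e'Ā`. -/
noncomputable def eGen (k : Type u) [Field k] (A : Type u) [Ring A] [Algebra k A] :
    eDupMod k A := ⟨eDup' k A, Submodule.mem_span_singleton_self _⟩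

/-- Left multiplication by `e'`, as a projection of `Ā` onto `e'Ā`. -/
noncomputable def toEDup : (Dup k A)ᵐᵒᵖ →ₗ[(Dup k A)ᵐᵒᵖ] eDupMod k A :=
  LinearMap.toSpanSingleton _ _ (eGen k A)

theorem eGen_smul (x : eDupMod k A) : op x.1 • eGen k A = x := by
  apply Subtype.ext
  rw [eDupMod_smul_val]
  change eDup' k A * x.1 = x.1
  rw [eDup'_mul]
  apply TrivSqZeroExt.ext
  · ext
    · simp [eDupMod_fst]
    · simp
  · simp

theorem eDupMod_projective : Module.Projective (Dup k A)ᵐᵒᵖ (eDupMod k A) := by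
  refine Module.Projective.of_split
    (P := eDupMod k A) (M := (Dup k A)ᵐᵒᵖ)
    { toFun := fun x => op x.1, map_add' := fun _ _ => rfl, map_smul' := fun _ _ => rfl }
    toEDup ?_
  ext1 x
  exact eGen_smul x

/-! ### The simple modules `S_x` and `S_{x'}` and the projective cover of `S_{x'}` -/

section Simple
variable (S : ModuleCat.{u} Aᵐᵒᵖ)

theorem exists_op_smul_eq [IsSimpleModule Aᵐᵒᵖ S] (s t : S) (hs : s ≠ 0) : ∃ a : A, op a • s = t :=
  let ⟨a, ha⟩ := IsSimpleModule.toSpanSingleton_surjective Aᵐᵒᵖ hs t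
  ⟨a.unop, ha⟩

theorem resA_simple [IsSimpleModule Aᵐᵒᵖ S] :
    IsSimpleModule (Dup k A)ᵐᵒᵖ ((resA k A).obj S) := by
  rw [isSimpleModule_iff_toSpanSingleton_surjective]
  refine ⟨IsSimpleModule.nontrivial Aᵐᵒᵖ S, ?_⟩
  intro m hm t
  obtain ⟨a, ha⟩ := exists_op_smul_eq S m t hm
  exact ⟨op (inl (a, 0)), ha⟩

theorem resA'_simple [IsSimpleModule Aᵐᵒᵖ S] :
    IsSimpleModule (Dup k A)ᵐᵒᵖ ((resA' k A).obj S) := by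
  rw [isSimpleModule_iff_toSpanSingleton_surjective]
  refine ⟨IsSimpleModule.nontrivial Aᵐᵒᵖ S, ?_⟩
  intro m hm t
  obtain ⟨a, ha⟩ := exists_op_smul_eq S m t hm
  exact ⟨op (inl (0, a)), ha⟩

/-- The homomorphism `e'Ā → S_{x'}` sending `e'` to `s₀`. -/
noncomputable def topMap (s₀ : S) : eDupMod k A →ₗ[(Dup k A)ᵐᵒᵖ] (resA' k A).obj S where
  toFun x := (show S from op x.1.fst.2 • s₀)
  map_add' x y := by
    change (op (x.1.fst.2 + y.1.fst.2) • s₀ : S) = op x.1.fst.2 • s₀ + op y.1.fst.2 • s₀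
    rw [MulOpposite.op_add, add_smul]
  map_smul' r x := by
    change (op (x.1.fst.2 * r.unop.fst.2) • s₀ : S) = op r.unop.fst.2 • op x.1.fst.2 • s₀
    rw [MulOpposite.op_mul, mul_smul]

theorem topMap_surjective [IsSimpleModule Aᵐᵒᵖ S] (s₀ : S) (h : s₀ ≠ 0) :
    Function.Surjective (topMap (k := k) S s₀) := by
  intro t
  obtain ⟨a, ha⟩ := exists_op_smul_eq S s₀ t h
  exact ⟨⟨inl (0, a), (mem_eDup'_span _).mpr rfl⟩, ha⟩

end Simple

/-- A projective cover `P` of `S_{x'}` is a summand of `e'Ā` compatibly with the maps to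
`S_{x'}`. -/
theorem exists_retract {P T : ModuleCat.{u} (Dup k A)ᵐᵒᵖ} {p : P →ₗ[(Dup k A)ᵐᵒᵖ] T}
    (hp : IsProjCover (Dup k A)ᵐᵒᵖ P T p) (π : eDupMod k A →ₗ[(Dup k A)ᵐᵒᵖ] T)
    (hπ : Function.Surjective π) :
    ∃ (h : eDupMod k A →ₗ[(Dup k A)ᵐᵒᵖ] P) (σ : P →ₗ[(Dup k A)ᵐᵒᵖ] eDupMod k A),
      h.comp σ = LinearMap.id ∧ p.comp h = π ∧ π.comp σ = p := by
  have := eDupMod_projective (k := k) (A := A)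
  have := hp.1
  obtain ⟨h, hh⟩ := Module.projective_lifting_property p π hp.2.1
  have hr : LinearMap.range h = ⊤ := by
    apply hp.2.2
    rw [← Submodule.comap_map_eq, ← LinearMap.range_comp, hh, LinearMap.range_eq_top.mpr hπ,
      Submodule.comap_top]
  obtain ⟨σ, hσ⟩ := Module.projective_lifting_property h LinearMap.id
    (LinearMap.range_eq_top.mp hr)
  refine ⟨h, σ, hσ, hh, ?_⟩
  rw [← hh, LinearMap.comp_assoc, hσ, LinearMap.comp_id]

/-- Let `x ∈ X` be a nonzero element annihilated by `DA`, and `h : e'Ā → P` and `σ : P → e'Ā` be such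
that `σ (h e') = (0, a, q)` with `x·(a,0,0) = x`.  Then there is a nonzero map `X → P`, obtained by
composing `h` with the map `X → e'Ā` given by a functional which does not vanish at `x`. -/
theorem exists_hom_ne_zero [FiniteDimensional k A] {X P : ModuleCat.{u} (Dup k A)ᵐᵒᵖ} (x : X)
    (hx : x ≠ 0) (h : eDupMod k A →ₗ[(Dup k A)ᵐᵒᵖ] P) (σ : P →ₗ[(Dup k A)ᵐᵒᵖ] eDupMod k A)
    (hDA : ∀ q : Module.Dual k A, op (inr q : Dup k A) • x = 0)
    (hfix : op (inl ((σ (h (eGen k A))).1.fst.2, 0) : Dup k A) • x = x) :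
    ∃ j : X →ₗ[(Dup k A)ᵐᵒᵖ] P, j ≠ 0 := by
  obtain ⟨l, hl, hlx⟩ := exists_functional_ne_zero X x hx
  set ψ := homOfFunctional l hl with hψ
  refine ⟨h.comp ψ, fun h0 => hlx ?_⟩
  have h1 : σ (h (ψ x)) = 0 := by
    have := LinearMap.congr_fun h0 x
    rw [LinearMap.comp_apply, LinearMap.zero_apply] at this
    rw [this, map_zero]
  -- `σ ∘ h` is left multiplication by `w = σ (h e')`
  rw [← eGen_smul (ψ x), map_smul, map_smul] at h1
  set w := σ (h (eGen k A)) with hw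
  have h2 : (w.1 * (ψ x).1).snd 1 = 0 := congrArg evalOne h1
  have h3 : (ψ x).1.fst = 0 := by
    apply Prod.ext
    · exact eDupMod_fst _
    · rw [hψ, homOfFunctional_fst]
      apply dual_ext (k := k)
      intro q
      rw [apply_fstPart, hDA]
      simp
  rwa [TrivSqZeroExt.snd_mul, h3, MulOpposite.op_zero, zero_smul, add_zero, dual_smul_apply,
    one_mul, hψ, homOfFunctional_snd, hfix] at h2

end DuplicatedAlgebra

/-- For the duplicated algebra Ā of a finite dimensional hereditary
algebra A over an algebraically closed field, the right Ā-module e'Ā is projective and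
injective; moreover for each vertex x (encoded by a simple right A-module S = S_x), the
indecomposable projective Ā-module P̄_{x'} (the projective cover of the simple S_{x'},
i.e. of S viewed via the second projection Ā → A') is isomorphic to the indecomposable
injective Ā-module Ī_x (the injective envelope of S_x = S viewed via the first projection
Ā → A); in particular P̄_{x'} is injective and Ī_x is projective, and this module has
socle S_x and top S_{x'}. -/
theorem duplicated_algebra_eDup_projective_injective
    (k A : Type u) [Field k] [IsAlgClosed k] [Ring A] [Algebra k A]
    [FiniteDimensional k A] (hA : IsHereditaryRing Aᵐᵒᵖ) :
    (Module.Projective (Dup k A)ᵐᵒᵖ (eDupMod k A) ∧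
      Module.Injective (Dup k A)ᵐᵒᵖ (eDupMod k A)) ∧
    (∀ S : ModuleCat.{u} Aᵐᵒᵖ, IsSimpleModule Aᵐᵒᵖ S →
      ∀ (P I : ModuleCat.{u} (Dup k A)ᵐᵒᵖ)
        (p : P →ₗ[(Dup k A)ᵐᵒᵖ] ((resA' k A).obj S))
        (i : ((resA k A).obj S) →ₗ[(Dup k A)ᵐᵒᵖ] I),
        IsProjCover (Dup k A)ᵐᵒᵖ P ((resA' k A).obj S) p →
        IsInjEnvelope (Dup k A)ᵐᵒᵖ ((resA k A).obj S) I i →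
        Nonempty (P ≃ₗ[(Dup k A)ᵐᵒᵖ] I) ∧
          Module.Projective (Dup k A)ᵐᵒᵖ I ∧ Module.Injective (Dup k A)ᵐᵒᵖ P) := by
  refine ⟨⟨eDupMod_projective, eDupMod_injective⟩, ?_⟩
  intro S hS P I p i hp hi
  have := resA_simple (k := k) S
  have := resA'_simple (k := k) S
  have := IsSimpleModule.nontrivial Aᵐᵒᵖ S
  obtain ⟨s₀, hs₀⟩ := exists_ne (0 : S)
  obtain ⟨h, σ, hσ, hph, hπσ⟩ := exists_retract hp (topMap S s₀) (topMap_surjective S s₀ hs₀)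
  have hPinj : Module.Injective (Dup k A)ᵐᵒᵖ P := injective_of_retract eDupMod_injective σ h hσ
  have hfix : (op (σ (h (eGen k A))).1.fst.2 • s₀ : S) = s₀ := by
    have h1 := LinearMap.congr_fun hπσ (h (eGen k A))
    have h2 := LinearMap.congr_fun hph (eGen k A)
    have h3 : (op (σ (h (eGen k A))).1.fst.2 • s₀ : S) = op (1 : A) • s₀ := h1.trans h2
    rw [h3, MulOpposite.op_one, one_smul]
  obtain ⟨j, hj⟩ := exists_hom_ne_zero (X := (resA k A).obj S) s₀ hs₀ h σ
    (fun _ => zero_smul Aᵐᵒᵖ s₀) hfix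
  obtain ⟨e⟩ := equiv_of_injEnvelope hi hPinj (indecomposable_of_projCover hp) j hj
  have := hp.1
  exact ⟨⟨e⟩, Module.Projective.of_equiv e, hPinj⟩
end

section
/- Let A be a finite-dimensional hereditary algebra and Ā its duplicated algebra. If M is an indecomposable Ā-module that does not belong to ind A (i.e., M is not the restriction of an A-module along Ā → A), then there exist a sink a in the quiver Q_A of A and a path of non-zero morphisms between indecomposable Ā-modules from the projective-injective module P̄_{a'} to M. -/
/-!
For an idempotent `c` of `A` let `c'` be its copy in the second diagonal block of `Ā`. A module `M`
that is not an `A`-module satisfies `M e' ≠ 0`, so `M f' ≠ 0` for some primitive idempotent `f`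
(`exists_primitive`): there is a nonzero map `f'Ā → M`, and `f'Ā` is indecomposable because
`f'Āf' = fAf` (`projAt_indec`). As `A` is hereditary, any simple right ideal `S ⊆ fA` is projective,
hence `S ≅ gA` for an idempotent `g`, and the inclusion is left multiplication by some `s = fsg ≠ 0`
(`exists_sink`). Left multiplication by `s'` is then a nonzero map `g'Ā → f'Ā`, giving the path
`g'Ā → f'Ā → M`.

It remains to see that `g'Ā` is the injective envelope of `S`. It is injective because
`g'Ā ≅ Hom_k(Āg, k)`, with `g` in the first block (`projAt_injective`). Its socle consists of the
functionals `y ↦ μ(g a y g)` on `A` with `a ∈ gA`, where `μ` is a fixed functional with `μ(g) ≠ 0`;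
this is an essential copy of `gA` since `gAg = kg` by Schur's lemma (`corner_scalar`).
-/

open TrivSqZeroExt Module CategoryTheory

universe u

section SinkPath
variable {k : Type u} [Field k] {A : Type u} [Ring A] [Algebra k A]

theorem dup_snd_mul (x y : Dup k A) (t : A) :
    (x * y).snd t = y.snd (t * x.fst.2) + x.snd (y.fst.1 * t) := rfl

/-- The element `c'` of `Ā`: the copy of `c : A` in the second diagonal block. -/
noncomputable def diag₂ (c : A) : Dup k A := inl ((0, c) : A × A)

/-- The copy of `c : A` in the first diagonal block of `Ā`. -/
noncomputable def diag₁ (c : A) : Dup k A := inl ((c, 0) : A × A)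

theorem dup_ext {x y : Dup k A} (h1 : x.fst.1 = y.fst.1) (h2 : x.fst.2 = y.fst.2)
    (h3 : ∀ t, x.snd t = y.snd t) : x = y :=
  TrivSqZeroExt.ext (Prod.ext h1 h2) (LinearMap.ext h3)

/-! ### The right ideals `f'Ā` and their indecomposability -/

theorem diag₂_mul (c d : A) : (diag₂ (c * d) : Dup k A) = diag₂ c * diag₂ d := by
  refine dup_ext ?_ ?_ fun t => ?_
  · simp [diag₂]
  · simp [diag₂]
  · rw [dup_snd_mul]; simp [diag₂]

theorem diag₂_mul_snd (c : A) (z : Dup k A) (t : A) : (diag₂ c * z).snd t = z.snd (t * c) := by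
  rw [dup_snd_mul]; simp [diag₂]

theorem diag₂_mul_fst (c : A) (z : Dup k A) : (diag₂ c * z).fst = (0, c * z.fst.2) := by
  simp [diag₂, Prod.ext_iff]

theorem diag₂_add (c d : A) : (diag₂ (c + d) : Dup k A) = diag₂ c + diag₂ d := by
  simp [diag₂, ← inl_add]

/-- The right ideal `f'Ā` for an idempotent `f` of `A`, described by the
equation `f'z = z`. -/
noncomputable def projAt (k : Type u) [Field k] {A : Type u} [Ring A] [Algebra k A] (f : A) :
    Submodule (Dup k A)ᵐᵒᵖ (Dup k A) where
  carrier := {z | diag₂ f * z = z}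
  add_mem' {x y} hx hy := by
    show diag₂ f * (x + y) = x + y
    rw [mul_add, hx, hy]
  zero_mem' := mul_zero _
  smul_mem' r x hx := by
    show diag₂ f * (x * r.unop) = x * r.unop
    rw [← mul_assoc, hx]

theorem mem_projAt {f : A} {z : Dup k A} : z ∈ projAt k f ↔ diag₂ f * z = z := Iff.rfl

theorem diag₂_mul_mem {f : A} (hf : f * f = f) (z : Dup k A) : diag₂ f * z ∈ projAt k f := by
  rw [mem_projAt, ← mul_assoc, ← diag₂_mul, hf]

theorem projAt_projective {f : A} (hf : f * f = f) :
    Module.Projective (Dup k A)ᵐᵒᵖ (projAt k f) := by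
  let i : projAt k f →ₗ[(Dup k A)ᵐᵒᵖ] (Dup k A)ᵐᵒᵖ :=
    { toFun := fun z => MulOpposite.op z.1
      map_add' := fun _ _ => rfl
      map_smul' := fun _ _ => rfl }
  let s : (Dup k A)ᵐᵒᵖ →ₗ[(Dup k A)ᵐᵒᵖ] projAt k f :=
    { toFun := fun y => ⟨diag₂ f * y.unop, diag₂_mul_mem hf _⟩
      map_add' := fun x y => Subtype.ext (mul_add _ _ _)
      map_smul' := fun r x => Subtype.ext (mul_assoc _ _ _).symm }
  exact Module.Projective.of_split i s (LinearMap.ext fun z => Subtype.ext z.2)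

/-- `f'Ā` is indecomposable when `f` is a primitive idempotent, because
`f'Āf' = fAf`. -/
theorem projAt_indec {f : A} (hf : f * f = f) (hf0 : f ≠ 0)
    (hprim : ∀ c : A, c * c = c → f * c = c → c * f = c → c = 0 ∨ c = f) :
    Indec (Dup k A)ᵐᵒᵖ (ModuleCat.of (Dup k A)ᵐᵒᵖ (projAt k f)) := by
  have hff : (diag₂ f : Dup k A) ∈ projAt k f := by
    rw [mem_projAt, ← diag₂_mul, hf]
  constructor
  · intro h
    have : (⟨diag₂ f, hff⟩ : projAt k f) ∈ (⊥ : Submodule (Dup k A)ᵐᵒᵖ (projAt k f)) := by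
      have h' : (⊥ : Submodule (Dup k A)ᵐᵒᵖ (projAt k f)) = ⊤ := h
      rw [h']; trivial
    rw [Submodule.mem_bot] at this
    have h2 := congrArg (fun z : projAt k f => z.1.fst.2) this
    exact hf0 h2
  · intro U V hUV
    change Submodule (Dup k A)ᵐᵒᵖ (projAt k f) at U V
    obtain ⟨u, hu, v, hv, huv⟩ := Submodule.mem_sup.1
      (show (⟨diag₂ f, hff⟩ : projAt k f) ∈ U ⊔ V by rw [hUV.sup_eq_top]; trivial)
    have hdis : ∀ z : projAt k f, z ∈ U → z ∈ V → z = 0 := fun z h1 h2 => by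
      have := hUV.disjoint.le_bot (Submodule.mem_inf.2 ⟨h1, h2⟩)
      simpa using this
    have huv' : u.1 + v.1 = diag₂ f := congrArg Subtype.val huv
    have key : ∀ z : projAt k f, u.1 * z.1 + v.1 * z.1 = z.1 := fun z => by
      rw [← add_mul, huv']; exact z.2
    have hUm : ∀ z : Dup k A, MulOpposite.op z • u ∈ U := fun z => U.smul_mem _ hu
    have hVm : ∀ z : Dup k A, MulOpposite.op z • v ∈ V := fun z => V.smul_mem _ hv
    have hvu : v.1 * u.1 = 0 := by
      have h1 : MulOpposite.op u.1 • v = MulOpposite.op (1 - u.1) • u := by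
        apply Subtype.ext
        show v.1 * u.1 = u.1 * (1 - u.1)
        rw [mul_sub, mul_one]
        rw [eq_sub_iff_add_eq, add_comm]; exact key u
      have h2 := hdis (MulOpposite.op u.1 • v) (h1 ▸ hUm _) (hVm _)
      exact congrArg Subtype.val h2
    have huvz : u.1 * v.1 = 0 := by
      have h1 : MulOpposite.op v.1 • u = MulOpposite.op (1 - v.1) • v := by
        apply Subtype.ext
        show u.1 * v.1 = v.1 * (1 - v.1)
        rw [mul_sub, mul_one]
        rw [eq_sub_iff_add_eq]; exact key v
      have h2 := hdis (MulOpposite.op v.1 • u) (hUm _) (h1 ▸ hVm _)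
      exact congrArg Subtype.val h2
    have huu : u.1 * u.1 = u.1 := by simpa [hvu] using key u
    have huf : u.1 * diag₂ f = u.1 := by rw [← huv', mul_add, huu, huvz, add_zero]
    have hfu : diag₂ f * u.1 = u.1 := u.2
    have hsnd : ∀ t, u.1.snd t = 0 := fun t => by
      have h1 := congrArg (fun z : Dup k A => z.snd t) huf
      have h0 : u.1.fst.1 = 0 := by
        have := congrArg (fun z : Dup k A => z.fst.1) hfu
        simpa [diag₂] using this.symm
      rw [← h1]
      show (u.1 * diag₂ f).snd t = 0
      rw [dup_snd_mul]; simp [diag₂]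
    have hc : u.1 = diag₂ u.1.fst.2 := by
      refine dup_ext ?_ rfl fun t => ?_
      · have := congrArg (fun z : Dup k A => z.fst.1) hfu
        simpa [diag₂] using this.symm
      · rw [hsnd]; simp [diag₂]
    have e1 : u.1.fst.2 * u.1.fst.2 = u.1.fst.2 := congrArg (fun z : Dup k A => z.fst.2) huu
    have e2 : f * u.1.fst.2 = u.1.fst.2 := congrArg (fun z : Dup k A => z.fst.2) hfu
    have e3 : u.1.fst.2 * f = u.1.fst.2 := congrArg (fun z : Dup k A => z.fst.2) huf
    rcases hprim _ e1 e2 e3 with h | h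
    · left
      have hu0 : u.1 = 0 := by rw [hc, h]; rfl
      refine (Submodule.eq_bot_iff _).2 fun z hz => hdis z hz ?_
      have : z = MulOpposite.op z.1 • v := Subtype.ext (by
        have := key z
        rw [hu0, zero_mul, zero_add] at this
        exact this.symm)
      rw [this]; exact hVm _
    · right
      have hv0 : v.1 = 0 := by
        have h1 : u.1 = diag₂ f := by rw [hc, h]
        rw [h1] at huv'; simpa using huv'
      refine (Submodule.eq_bot_iff _).2 fun z hz => hdis z ?_ hz
      have : z = MulOpposite.op z.1 • u := Subtype.ext (by
        have := key z
        rw [hv0, zero_mul, add_zero] at this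
        exact this.symm)
      rw [this]; exact hUm _

/-! ### Injectivity of `f'Ā` -/

/-- The linear functional `z ↦ z.snd 1` is non-degenerate on `f'Ā`. -/
theorem projAt_nondeg [FiniteDimensional k A] {f : A} {z : Dup k A} (hz : z ∈ projAt k f)
    (h : ∀ y : Dup k A, (z * y).snd 1 = 0) : z = 0 := by
  refine dup_ext ?_ ?_ fun t => ?_
  · rw [← mem_projAt.1 hz, diag₂_mul_fst]; rfl
  · show z.fst.2 = 0
    refine (Module.forall_dual_apply_eq_zero_iff k _).1 fun ψ => ?_
    have := h (inr ψ)
    rw [dup_snd_mul] at this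
    simpa using this
  · have := h (diag₁ t)
    rw [dup_snd_mul] at this
    simpa [diag₁] using this

/-- The nondegenerate functional `z ↦ z.snd 1` turns `f'Ā` into the `k`-dual of `Āf` (with `f` in
the first block), so that extending a homomorphism from a right ideal amounts to extending a
`k`-linear functional. -/
theorem projAt_injective [FiniteDimensional k A] {f : A} (hf : f * f = f) :
    Module.Injective (Dup k A)ᵐᵒᵖ (projAt k f) := by
  apply Module.Baer.injective
  intro I h
  -- the underlying `k`-subspace of `I`
  let scal : k → Dup k A := fun c => inl (algebraMap k (A × A) c)
  have hscal : ∀ (c : k) (x : Dup k A), c • x = x * scal c := fun c x => by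
    refine dup_ext ?_ ?_ fun t => ?_
    · simp [scal, Algebra.smul_def, Algebra.commutes]
    · simp [scal, Algebra.smul_def, Algebra.commutes]
    · rw [dup_snd_mul]
      simp [scal, ← Algebra.smul_def]
  let W : Submodule k (Dup k A) :=
    { carrier := {x | MulOpposite.op x ∈ I}
      add_mem' := fun {x y} hx hy => I.add_mem hx hy
      zero_mem' := I.zero_mem
      smul_mem' := fun c x hx => by
        show MulOpposite.op (c • x) ∈ I
        rw [hscal]
        exact I.smul_mem (MulOpposite.op (scal c)) hx }
  let φ₀ : W →ₗ[k] k :=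
    { toFun := fun x => (h ⟨MulOpposite.op x.1, x.2⟩).1.snd 1
      map_add' := fun x y => by
        have : h ⟨MulOpposite.op (x + y).1, (x + y).2⟩ =
          h ⟨MulOpposite.op x.1, x.2⟩ + h ⟨MulOpposite.op y.1, y.2⟩ := by
            rw [← map_add]; rfl
        rw [this]; rfl
      map_smul' := fun c x => by
        have : h ⟨MulOpposite.op (c • x).1, (c • x).2⟩ =
          MulOpposite.op (scal c) • h ⟨MulOpposite.op x.1, x.2⟩ := by
            rw [← map_smul]
            congr 1
            apply Subtype.ext
            show MulOpposite.op (c • x.1) = _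
            rw [hscal]; rfl
        rw [this]
        show ((h ⟨MulOpposite.op x.1, x.2⟩).1 * scal c).snd 1 = _
        rw [← hscal]; rfl }
  obtain ⟨φ, hφ⟩ := LinearMap.exists_extend φ₀
  have hφ' : ∀ (x : Dup k A) (hx : MulOpposite.op x ∈ I), φ x = (h ⟨_, hx⟩).1.snd 1 :=
    fun x hx => LinearMap.congr_fun hφ ⟨x, hx⟩
  -- `φ` restricted to `DA` is evaluation at some `c`, and restricted to the first
  -- diagonal copy of `A` it is some `p`
  let φI : Module.Dual k (Module.Dual k A) :=
    { toFun := fun ψ => φ (inr ψ)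
      map_add' := fun a b => by rw [← map_add, inr_add]
      map_smul' := fun r a => by rw [RingHom.id_apply, ← map_smul, inr_smul] }
  -- finite-dimensionality makes the functional `φ|DA` evaluation at some `c : A`
  obtain ⟨c, hc⟩ := (Module.evalEquiv k A).surjective φI
  have hc' : ∀ ψ : Module.Dual k A, φ (inr ψ) = ψ c := fun ψ => (LinearMap.congr_fun hc ψ).symm
  let p : Module.Dual k A :=
    { toFun := fun a => φ (diag₁ a)
      map_add' := fun a b => by rw [← map_add]; congr 1; simp [diag₁, ← inl_add]
      map_smul' := fun r a => by
        rw [RingHom.id_apply, ← map_smul]; congr 1; simp [diag₁, ← inl_smul] }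
  let q₀ : Dup k A := inl (0, c) + inr p
  let G : (Dup k A)ᵐᵒᵖ →ₗ[(Dup k A)ᵐᵒᵖ] projAt k f :=
    { toFun := fun y => ⟨diag₂ f * (q₀ * y.unop), diag₂_mul_mem hf _⟩
      map_add' := fun x y => Subtype.ext (by
        show diag₂ f * (q₀ * (x.unop + y.unop)) = diag₂ f * (q₀ * x.unop) + diag₂ f * (q₀ * y.unop)
        rw [mul_add, mul_add])
      map_smul' := fun r x => Subtype.ext (by
        show diag₂ f * (q₀ * (x.unop * r.unop)) = diag₂ f * (q₀ * x.unop) * r.unop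
        simp only [mul_assoc]) }
  have claim1 : ∀ y : Dup k A, (diag₂ f * (q₀ * y)).snd 1 = φ (y * diag₁ f) := fun y => by
    have e : y * diag₁ f = diag₁ (y.fst.1 * f) + inr (y.snd.comp (LinearMap.mulLeft k f)) := by
      refine dup_ext ?_ ?_ fun t => ?_
      · simp [diag₁]
      · simp [diag₁]
      · rw [dup_snd_mul]; simp [diag₁]
    rw [e, map_add, hc', diag₂_mul_snd, dup_snd_mul, add_comm]
    simp [q₀, p]
  have claim2 : ∀ (x : Dup k A) (hx : MulOpposite.op x ∈ I),
      (h ⟨_, hx⟩).1.snd 1 = φ (x * diag₁ f) := fun x hx => by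
    have hx' : MulOpposite.op (x * diag₁ f) ∈ I := I.smul_mem (MulOpposite.op (diag₁ f)) hx
    have e : h ⟨_, hx'⟩ = MulOpposite.op (diag₁ f : Dup k A) • h ⟨_, hx⟩ := by
      rw [← map_smul]; rfl
    rw [hφ' _ hx', e]
    show _ = ((h ⟨_, hx⟩).1 * diag₁ f).snd 1
    rw [dup_snd_mul, ← mem_projAt.1 (h ⟨_, hx⟩).2, diag₂_mul_snd, diag₂_mul_snd]
    simp [diag₁, hf]
  refine ⟨G, fun x hx => Subtype.ext (sub_eq_zero.1
    (projAt_nondeg (k := k) (f := f) ((projAt k f).sub_mem (G x).2 (h ⟨x, hx⟩).2) fun y => ?_))⟩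
  have hx' : MulOpposite.op (x.unop * y) ∈ I := I.smul_mem (MulOpposite.op y) hx
  have e : h ⟨_, hx'⟩ = MulOpposite.op y • h ⟨x, hx⟩ := by
    rw [← map_smul]; rfl
  have e2 : (h ⟨_, hx'⟩).1 = (h ⟨x, hx⟩).1 * y := by rw [e]; rfl
  rw [sub_mul, snd_sub, LinearMap.sub_apply, sub_eq_zero, ← e2, claim2, ← claim1]
  show (diag₂ f * (q₀ * x.unop) * y).snd 1 = _
  simp only [mul_assoc]

/-! ### Simple projectives and primitive idempotents of `A` -/

/-- Every nonzero idempotent `f` admits a simple projective right ideal `S` inside `fA`. It is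
recorded through a section `σ` of `A → S, a ↦ sa`; the idempotent `g = σ(s)` generates a right
ideal isomorphic to `S`, and `s` spans the image of `gA` in `fA`. -/
theorem exists_sink [FiniteDimensional k A] (hA : IsHereditaryRing Aᵐᵒᵖ) {f : A} (hf : f * f = f)
    (hf0 : f ≠ 0) :
    ∃ (S : Submodule Aᵐᵒᵖ Aᵐᵒᵖ) (σ : S →ₗ[Aᵐᵒᵖ] Aᵐᵒᵖ) (s : S) (g : A),
      IsSimpleModule Aᵐᵒᵖ S ∧ (σ s).unop = g ∧ s.1.unop * g = s.1.unop ∧ s ≠ 0 ∧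
      Function.Injective σ ∧ f * s.1.unop = s.1.unop ∧ g * g = g ∧ (∀ x, g * (σ x).unop = (σ x).unop) ∧
      ∀ v : A, g * v = v → v ≠ 0 → ∃ w, v * w = g := by
  have : IsArtinianRing Aᵐᵒᵖ := IsArtinianRing.of_finite k Aᵐᵒᵖ
  let F : Submodule Aᵐᵒᵖ Aᵐᵒᵖ := Submodule.span Aᵐᵒᵖ {MulOpposite.op f}
  have hF : F ≠ ⊥ := fun h => hf0 (by
    have := Submodule.span_singleton_eq_bot.1 h
    simpa using this)
  obtain ⟨S, hS, hSF⟩ := (IsAtomic.eq_bot_or_exists_atom_le F).resolve_left hF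
  have hsimp : IsSimpleModule Aᵐᵒᵖ S := isSimpleModule_iff_isAtom.2 hS
  have hproj : Module.Projective Aᵐᵒᵖ S := hA S
  have := hsimp.nontrivial
  obtain ⟨s, hs⟩ := exists_ne (0 : S)
  have hsurj : Function.Surjective (LinearMap.toSpanSingleton Aᵐᵒᵖ S s) :=
    IsSimpleModule.toSpanSingleton_surjective Aᵐᵒᵖ hs
  obtain ⟨σ, hσ⟩ := Module.projective_lifting_property _ (LinearMap.id : S →ₗ[Aᵐᵒᵖ] S) hsurj
  have hσ' : ∀ x : S, σ x • s = x := fun x => LinearMap.congr_fun hσ x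
  have hgs : ∀ x : S, (σ s).unop * (σ x).unop = (σ x).unop := fun x => by
    have : σ (σ x • s) = σ x := by rw [hσ']
    rw [map_smul] at this
    exact congrArg MulOpposite.unop this
  refine ⟨S, σ, s, (σ s).unop, hsimp, rfl, ?_, hs, fun x y hxy => ?_, ?_, hgs s, hgs, ?_⟩
  · exact congrArg (fun x : S => x.1.unop) (hσ' s)
  · rw [← hσ' x, hxy, hσ']
  · obtain ⟨a, ha⟩ := Submodule.mem_span_singleton.1 (hSF s.2)
    rw [← ha]
    show f * (f * a.unop) = f * a.unop
    rw [← mul_assoc, hf]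
  · intro v hv hv0
    have e : σ (MulOpposite.op v • s) = MulOpposite.op v := by
      rw [map_smul]; exact congrArg MulOpposite.op hv
    have hne : MulOpposite.op v • s ≠ 0 := fun h => hv0 (by
      rw [h, map_zero] at e; exact (MulOpposite.op_eq_zero_iff v).1 e.symm)
    obtain ⟨w, hw⟩ := IsSimpleModule.toSpanSingleton_surjective Aᵐᵒᵖ hne s
    refine ⟨w.unop, ?_⟩
    have h2 : σ (w • MulOpposite.op v • s) = σ s := congrArg σ hw
    rw [map_smul, e] at h2
    exact congrArg MulOpposite.unop h2

/-- Schur's lemma for `gA`: if `gA` is simple, then `gAg = kg`. -/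
theorem corner_scalar [IsAlgClosed k] [FiniteDimensional k A] {g : A} (hg : g * g = g)
    (hg0 : g ≠ 0) (hsimp : ∀ v : A, g * v = v → v ≠ 0 → ∃ w, v * w = g) (y : A) :
    ∃ t : k, g * y * g = t • g := by
  let V : Submodule k A := LinearMap.range (LinearMap.mulLeft k g)
  have hV : ∀ v : A, v ∈ V ↔ g * v = v := fun v =>
    ⟨fun ⟨x, hx⟩ => by rw [← hx]; simp [← mul_assoc, hg], fun h => ⟨v, h⟩⟩
  have : Nontrivial V := ⟨⟨⟨g, (hV g).2 hg⟩, 0, fun h => hg0 (congrArg Subtype.val h)⟩⟩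
  let T : Module.End k V := (LinearMap.mulLeft k (g * y * g)).restrict fun v _ => by
    rw [hV]; simp [← mul_assoc, hg]
  obtain ⟨t, ht⟩ := Module.End.exists_eigenvalue T
  obtain ⟨v, hv⟩ := ht.exists_hasEigenvector
  obtain ⟨w, hw⟩ := hsimp v.1 ((hV _).1 v.2) fun h => hv.2 (Subtype.ext h)
  refine ⟨t, ?_⟩
  have h1 : g * y * g * v.1 = t • v.1 := congrArg Subtype.val hv.apply_eq_smul
  have h2 := congrArg (· * w) h1
  simp only [mul_assoc, hw, smul_mul_assoc, hg] at h2
  rw [mul_assoc, h2]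

/-- Among the idempotents not annihilating `M`, one generating a minimal right ideal is
primitive. -/
theorem exists_primitive [FiniteDimensional k A] (M : ModuleCat.{u} (Dup k A)ᵐᵒᵖ)
    (hnotA : ¬ ActsThroughA k A M) :
    ∃ f : A, f * f = f ∧ (∃ m : M, MulOpposite.op (diag₂ f : Dup k A) • m ≠ 0) ∧
      ∀ c : A, c * c = c → f * c = c → c * f = c → c = 0 ∨ c = f := by
  let Z : Set A := {f | f * f = f ∧ ∃ m : M, MulOpposite.op (diag₂ f : Dup k A) • m ≠ 0}
  have hZ : Z.Nonempty := by
    unfold ActsThroughA at hnotA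
    push Not at hnotA
    obtain ⟨x, hx, m, hm⟩ := hnotA
    refine ⟨1, mul_one _, m, fun h => hm ?_⟩
    have e : x = diag₂ 1 * x := by
      refine dup_ext ?_ ?_ fun t => ?_
      · rw [diag₂_mul_fst, hx]
      · rw [diag₂_mul_fst, one_mul]
      · rw [diag₂_mul_snd, mul_one]
    rw [e, MulOpposite.op_mul, mul_smul, h, smul_zero]
  let W : A → Submodule k A := fun f => LinearMap.range (LinearMap.mulLeft k f)
  have hlt : ∀ f c : A, f * f = f → f * c = c → c * f = c → c * c = c → c ≠ f → W c < W f :=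
    fun f c hf h1 h2 h3 hne => by
      refine lt_of_le_of_ne ?_ fun h => hne ?_
      · rintro _ ⟨x, rfl⟩
        exact ⟨c * x, by simp [← mul_assoc, h1]⟩
      · have : f ∈ W c := by rw [h]; exact ⟨f, hf⟩
        obtain ⟨x, hx⟩ := this
        have hx' : c * x = f := hx
        rw [← h2, ← hx', ← mul_assoc, h3]
  obtain ⟨f, ⟨hf, m, hm⟩, hmin⟩ :=
    WellFounded.has_min (InvImage.wf W (wellFounded_lt : WellFounded
      ((· < ·) : Submodule k A → Submodule k A → Prop))) Z hZ
  refine ⟨f, hf, ⟨m, hm⟩, fun c hc h1 h2 => ?_⟩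
  by_contra! hcon
  obtain ⟨hc0, hcf⟩ := hcon
  have hd : (f - c) * (f - c) = f - c := by
    rw [mul_sub, sub_mul, sub_mul, hf, h1, h2, hc]; abel
  have hcZ : c ∉ Z := fun h => hmin c h (hlt f c hf h1 h2 hc hcf)
  have hdZ : f - c ∉ Z := fun h => hmin (f - c) h (hlt f (f - c) hf
    (by rw [mul_sub, hf, h1]) (by rw [sub_mul, hf, h2]) hd (by simpa using hc0))
  have z1 : MulOpposite.op (diag₂ c : Dup k A) • m = 0 := by
    by_contra h; exact hcZ ⟨hc, m, h⟩
  have z2 : MulOpposite.op (diag₂ (f - c) : Dup k A) • m = 0 := by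
    by_contra h; exact hdZ ⟨hd, m, h⟩
  apply hm
  rw [← add_sub_cancel c f, diag₂_add, MulOpposite.op_add, add_smul, z1, z2, add_zero]

end SinkPath

/-- If `M` is an indecomposable Ā-module which is not (the restriction
of) an A-module, then there are a sink `a` of `Q_A` (encoded by a simple projective right
A-module `S = S_a`) and a path in `ind Ā` from the projective-injective module
`P̄_{a'} = Ī_a` (the injective envelope over Ā of `S_a`, which is also projective) to `M`. -/
theorem path_from_proj_injective_at_sink
    (k A : Type u) [Field k] [IsAlgClosed k] [Ring A] [Algebra k A]
    [FiniteDimensional k A] (hA : IsHereditaryRing Aᵐᵒᵖ)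
    (M : ModuleCat.{u} (Dup k A)ᵐᵒᵖ) [Module.Finite (Dup k A)ᵐᵒᵖ M]
    (hM : Indec (Dup k A)ᵐᵒᵖ M) (hnotA : ¬ ActsThroughA k A M) :
    ∃ S : ModuleCat.{u} Aᵐᵒᵖ, IsSimpleModule Aᵐᵒᵖ S ∧ Module.Projective Aᵐᵒᵖ S ∧
      ∃ (Q : ModuleCat.{u} (Dup k A)ᵐᵒᵖ) (i : ((resA k A).obj S) →ₗ[(Dup k A)ᵐᵒᵖ] Q),
        IsInjEnvelope (Dup k A)ᵐᵒᵖ ((resA k A).obj S) Q i ∧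
        Module.Projective (Dup k A)ᵐᵒᵖ Q ∧
        IsPath (Dup k A)ᵐᵒᵖ Q M := by

  obtain ⟨f, hf, ⟨m, hm⟩, hprim⟩ := exists_primitive M hnotA
  have hf0 : f ≠ 0 := by
    rintro rfl
    apply hm
    have : (diag₂ 0 : Dup k A) = 0 := rfl
    rw [this, MulOpposite.op_zero, zero_smul]
  obtain ⟨S, σ, s, g, hS, hσs, hsg, hs0, hσi, hfs, hg, hgσ, hmin⟩ := exists_sink (k := k) hA hf hf0
  have hg0 : g ≠ 0 := by
    rintro rfl
    exact hs0 (Subtype.ext (MulOpposite.unop_injective (by rw [← hsg, mul_zero]; rfl)))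
  have hgprim : ∀ c : A, c * c = c → g * c = c → c * g = c → c = 0 ∨ c = g := by
    intro c hc h1 h2
    by_cases h0 : c = 0
    · exact Or.inl h0
    · obtain ⟨w, hw⟩ := hmin c h1 h0
      right
      rw [← h2, ← hw, ← mul_assoc, hc]
  have hscal := corner_scalar (k := k) hg hg0 hmin
  obtain ⟨μ, hμ⟩ : ∃ μ : Module.Dual k A, μ g ≠ 0 := by
    by_contra! h
    exact hg0 ((Module.forall_dual_apply_eq_zero_iff k _).1 h)
  have hQ := projAt_indec (k := k) hg hg0 hgprim
  have hP := projAt_indec (k := k) hf hf0 hprim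
  -- the functionals `y ↦ μ (g a y g)` on `A`, with `a ∈ gA`, form the socle of `g'Ā`
  let p : A → Module.Dual k A := fun a =>
    μ.comp ((LinearMap.mulLeft k (g * a)).comp (LinearMap.mulRight k g))
  have hp : ∀ a y, p a y = μ (g * a * (y * g)) := fun _ _ => rfl
  let i : ((resA k A).obj (ModuleCat.of Aᵐᵒᵖ S)) →ₗ[(Dup k A)ᵐᵒᵖ] projAt k g :=
    { toFun := fun x => ⟨inr (p (σ (show S from x)).unop), by
        rw [mem_projAt]
        refine dup_ext ?_ ?_ fun t => ?_
        · simp [diag₂]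
        · simp [diag₂]
        · rw [diag₂_mul_snd]
          show p _ (t * g) = p _ t
          rw [hp, hp, mul_assoc t, hg]⟩
      map_add' := fun x y => by
        apply Subtype.ext
        refine dup_ext (add_zero 0).symm (add_zero 0).symm fun t => ?_
        show p (σ ((show S from x) + (show S from y))).unop t = p _ t + p _ t
        rw [map_add]
        simp only [hp, MulOpposite.unop_add, mul_add, add_mul, map_add]
      map_smul' := fun r x => by
        apply Subtype.ext
        refine dup_ext (zero_mul _).symm (zero_mul _).symm fun t => ?_
        show p (σ ((MulOpposite.op r.unop.fst.1) • (show S from x))).unop t =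
          ((inr (p (σ (show S from x)).unop) : Dup k A) * r.unop).snd t
        rw [map_smul, dup_snd_mul]
        show μ _ = r.unop.snd (t * 0) + μ _
        simp [mul_assoc] }
  have hi : Function.Injective i := by
    intro x y hxy
    change S at x y
    by_contra hne
    have hv0 : (σ x).unop - (σ y).unop ≠ 0 := fun h =>
      hne (hσi (MulOpposite.unop_injective (sub_eq_zero.1 h)))
    obtain ⟨w, hw⟩ := hmin _ (by rw [mul_sub, hgσ, hgσ]) hv0
    have h1 : p (σ x).unop w = p (σ y).unop w :=
      congrArg (fun z : projAt k g => z.1.snd w) hxy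
    rw [hp, hp, hgσ, hgσ, ← sub_eq_zero, ← map_sub, ← mul_assoc, ← mul_assoc, ← sub_mul,
      ← sub_mul, hw, hg] at h1
    exact hμ h1
  refine ⟨ModuleCat.of Aᵐᵒᵖ S, hS, hA S, ModuleCat.of _ (projAt k g), i,
    ⟨projAt_injective hg, hi, ?_⟩, projAt_projective hg, hQ, hM, ?_⟩
  · intro U hU hbot
    change Submodule (Dup k A)ᵐᵒᵖ (projAt k g) at U
    obtain ⟨z, hz, hz0⟩ := U.exists_mem_ne_zero_of_ne_bot hU
    obtain ⟨y, hy⟩ : ∃ y : Dup k A, (z.1 * y).snd 1 ≠ 0 := by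
      by_contra! h
      exact hz0 (Subtype.ext (projAt_nondeg z.2 h))
    -- `z y` times the copy of `g` in the first block is a nonzero socle element of `U`
    set h : Module.Dual k A := (z.1 * y).snd with hh
    have hhg : ∀ t, h (t * g) = h t := fun t => by
      rw [hh, ← diag₂_mul_snd, ← mul_assoc, mem_projAt.1 z.2]
    have hr : ∀ t, (z.1 * y * diag₁ g).snd t = h (g * t * g) := fun t => by
      rw [dup_snd_mul, hhg]; simp [diag₁, hh]
    have hU' : MulOpposite.op (y * diag₁ g) • z ∈ U := U.smul_mem _ hz
    let c : k := h g / μ g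
    have hσx : σ (MulOpposite.op (c • g) • s) = MulOpposite.op (c • g) := by
      rw [map_smul]
      refine MulOpposite.unop_injective ?_
      show (σ s).unop * (c • g) = c • g
      rw [hσs, mul_smul_comm, hg]
    have hix : i (MulOpposite.op (c • g) • s : S) = MulOpposite.op (y * diag₁ g) • z := by
      apply Subtype.ext
      have hz1 : z.1.fst.1 = 0 := by
        rw [← mem_projAt.1 z.2, diag₂_mul_fst]
      refine dup_ext ?_ ?_ fun t => ?_
      · show 0 = z.1.fst.1 * _
        rw [hz1, zero_mul]
      · show 0 = z.1.fst.2 * (y.fst.2 * 0)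
        rw [mul_zero, mul_zero]
      · show p (σ (MulOpposite.op (c • g) • s)).unop t = (z.1 * (y * diag₁ g)).snd t
        obtain ⟨τ, hτ⟩ := hscal t
        rw [← mul_assoc, hr, hτ, hσx, hp, MulOpposite.unop_op, mul_smul_comm, hg,
          smul_mul_assoc, ← mul_assoc, hτ]
        simp only [map_smul, smul_eq_mul, c]
        field_simp
    have hmem : MulOpposite.op (y * diag₁ g) • z ∈ U ⊓ LinearMap.range i :=
      ⟨hU', ⟨_, hix⟩⟩
    rw [show U ⊓ LinearMap.range i = ⊥ from hbot, Submodule.mem_bot] at hmem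
    apply hy
    have h1 : (z.1 * (y * diag₁ g)).snd 1 = 0 :=
      congrArg (fun w : projAt k g => w.1.snd 1) hmem
    rwa [← mul_assoc, hr, hhg, mul_one, ← one_mul g, hhg] at h1
  · -- left multiplication by `s'` followed by evaluation at a vector of `M`
    let L : projAt k g →ₗ[(Dup k A)ᵐᵒᵖ] projAt k f :=
      { toFun := fun z => ⟨diag₂ s.1.unop * z.1, by
          rw [mem_projAt, ← mul_assoc, ← diag₂_mul, hfs]⟩
        map_add' := fun x y => Subtype.ext (mul_add _ _ _)
        map_smul' := fun r x => Subtype.ext (mul_assoc _ _ _).symm }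
    let E : projAt k f →ₗ[(Dup k A)ᵐᵒᵖ] M :=
      { toFun := fun z => MulOpposite.op z.1 • m
        map_add' := fun x y => by
          rw [← add_smul]; rfl
        map_smul' := fun r x => by
          rw [RingHom.id_apply, ← mul_smul]; rfl }
    refine (Relation.ReflTransGen.single (show NZHom _ _ (ModuleCat.of _ (projAt k f)) from
      ⟨hQ, hP, L, fun h => ?_⟩)).tail ⟨hP, hM, E, fun h => ?_⟩
    · have h1 := LinearMap.congr_fun h ⟨diag₂ g, by rw [mem_projAt, ← diag₂_mul, hg]⟩
      have h2 : diag₂ s.1.unop * diag₂ g = (0 : Dup k A) := congrArg Subtype.val h1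
      rw [← diag₂_mul, hsg] at h2
      have h3 : s.1.unop = 0 := congrArg (fun z : Dup k A => z.fst.2) h2
      exact hs0 (Subtype.ext (MulOpposite.unop_injective h3))
    · exact hm (LinearMap.congr_fun h ⟨diag₂ f, by rw [mem_projAt, ← diag₂_mul, hf]⟩)
end

section
/- Let A be a finite-dimensional hereditary algebra and Ā its duplicated algebra. For every vertex x of Q_A, the first cosyzygy of the projective A-module P_x in mod Ā is isomorphic to the inverse Auslander–Reiten translate of the injective A-module I_x: Ω_Ā^{-1} P_x ≅ τ_Ā^{-1} I_x. -/
/-!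
Write `R = Āᵐᵒᵖ`, so that right `Ā`-modules are left `R`-modules, and let `𝔞 = e'Ā` be the kernel
of `Ā → A`. It is a projective `R`-module because `e'` is idempotent, and an injective one because
`Hom(X, e'Ā)` is naturally the `k`-dual of `X` (`dupIdeal_injective`). The functionals of a basis of
`DA` embed `A`, hence `P = P_x`, into a finite power `𝔞ⁿ`. So the injective envelope `J` of `P` is
a direct summand of `𝔞ⁿ`: it is projective, and it has no nonzero maps to modules annihilated
by `𝔞`, that is, to `A`-modules.

Let `0 → P → J → N → 0` define the cosyzygy `N`, and let `θ : P → S → I = I_x`. The pushout of this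
sequence along `θ` is a sequence `0 → I → E → N → 0`, shown to be almost split in `isTauInv_core`.

* It does not split, since a section would extend the nonzero map `θ` to a map `J → I`.
* `N` is indecomposable (`indec_cosyzygy`): the projections of a decomposition lift to `J` and
  restrict to `P`, which has a local endomorphism ring.
* Given `h : W → N`, form the pullback `Q = W ×_N J`, which contains `P` as the kernel of `Q → W`.
  The map `h` lifts to `E` once `θ` extends to `Q`. Since the radical of `P` is its largest proper
  submodule, either `P ∩ 𝔞Q` lies in the radical, or `P ⊆ 𝔞Q`. In the first case `θ` induces a map on
  the image of `P` in the `A`-module `Q/𝔞Q`, and extends because `I` is injective over `A`. In the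
  second case the inclusion `P → Q` factors through a map `𝔞ᵐ → Q` and, by injectivity of `𝔞ᵐ`,
  extends to `J → 𝔞ᵐ → Q`. The composite `J → Q → J` is the identity on `P`, so it is an
  automorphism of the injective envelope, and `h` is a split epimorphism.
-/

open TrivSqZeroExt Module CategoryTheory

universe u

/-! ### Cosyzygies and the almost split sequence -/

section Core

variable {R : Type u} [Ring R]

/-- A map into `J` with image inside the image of an injection `ι` factors through `ι`. -/
lemma exists_factor_inj {X Y J : Type u} [AddCommGroup X] [AddCommGroup Y] [AddCommGroup J]
    [Module R X] [Module R Y] [Module R J] (ι : Y →ₗ[R] J) (hι : Function.Injective ι)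
    (f : X →ₗ[R] J) (hf : ∀ x, ∃ y, ι y = f x) : ∃ b : X →ₗ[R] Y, ∀ x, ι (b x) = f x := by
  choose b hb using hf
  refine ⟨⟨⟨b, fun x y => hι ?_⟩, fun r x => hι ?_⟩, hb⟩
  · simp [hb]
  · simp [hb]

/-- A map whose kernel contains that of a surjection `q` factors through `q`. -/
lemma exists_factor_surj {X Y Z : Type u} [AddCommGroup X] [AddCommGroup Y] [AddCommGroup Z]
    [Module R X] [Module R Y] [Module R Z] (q : X →ₗ[R] Y) (hq : Function.Surjective q)
    (m : X →ₗ[R] Z) (hm : ∀ x, q x = 0 → m x = 0) : ∃ u : Y →ₗ[R] Z, ∀ x, u (q x) = m x := by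
  have key : ∀ x x', q x = q x' → m x = m x' := fun x x' h => by
    rw [← sub_eq_zero, ← map_sub]; exact hm _ (by simp [h])
  choose s hs using hq
  refine ⟨⟨⟨fun y => m (s y), fun x y => ?_⟩, fun r x => ?_⟩, fun x => key _ _ (hs _)⟩
  · rw [← map_add]; exact key _ _ (by simp [hs])
  · rw [RingHom.id_apply, ← map_smul]; exact key _ _ (by simp [hs])

/-- A map out of an essential extension is injective as soon as it is so on the submodule. -/
lemma injective_of_essential {P J X : Type u} [AddCommGroup P] [AddCommGroup J] [AddCommGroup X]
    [Module R P] [Module R J] [Module R X] (ι : P →ₗ[R] J)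
    (hess : ∀ U : Submodule R J, U ≠ ⊥ → U ⊓ LinearMap.range ι ≠ ⊥)
    (γ : J →ₗ[R] X) (hγ : ∀ v, γ (ι v) = 0 → ι v = 0) : Function.Injective γ := by
  rw [← LinearMap.ker_eq_bot]
  by_contra h
  refine hess _ h ?_
  rw [eq_bot_iff]
  rintro _ ⟨h1, v, rfl⟩
  exact hγ v h1

/-- An endomorphism of the injective envelope `ι : P → J` restricting to an automorphism of `P`
is an automorphism. -/
lemma bijective_of_envelope {P J : Type u} [AddCommGroup P] [AddCommGroup J]
    [Module R P] [Module R J] [hJ : Module.Injective R J] (ι : P →ₗ[R] J)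
    (hι : Function.Injective ι)
    (hess : ∀ U : Submodule R J, U ≠ ⊥ → U ⊓ LinearMap.range ι ≠ ⊥)
    (γ : J →ₗ[R] J) (b : P →ₗ[R] P) (hb : Function.Bijective b)
    (hγ : ∀ v, γ (ι v) = ι (b v)) : Function.Bijective γ := by
  have hinj : Function.Injective γ := by
    refine injective_of_essential ι hess γ fun v hv => ?_
    rw [hγ, ← map_zero ι] at hv
    rw [hb.1 ((hι hv).trans (map_zero b).symm), map_zero]
  obtain ⟨r, hr⟩ := hJ.out γ hinj LinearMap.id
  -- the retraction `r` of `γ` is injective, because it is so on the essential submodule `ι P`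
  have hrinj : Function.Injective r := by
    refine injective_of_essential ι hess r fun v hv => ?_
    obtain ⟨w, rfl⟩ := hb.2 v
    rw [← hγ, hr] at hv
    rw [← hγ, show ι w = 0 from hv, map_zero]
  exact ⟨hinj, fun y => ⟨r y, hrinj (by rw [hr]; rfl)⟩⟩

/-- If a projective module `P` has a submodule `M₀ ≠ P` containing every proper submodule, then
its endomorphism ring is local. -/
lemma bijective_or_of_local {P : Type u} [AddCommGroup P] [Module R P] [Module.Projective R P]
    (M₀ : Submodule R P) (hM₀ : M₀ ≠ ⊤) (hloc : ∀ U : Submodule R P, U ≤ M₀ ∨ U = ⊤)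
    (b : P →ₗ[R] P) : Function.Bijective b ∨ Function.Bijective (LinearMap.id - b : P →ₗ[R] P) := by
  -- a sum of two submodules is everything only if one of them is
  have hsum : ∀ U V : Submodule R P, U ⊔ V = ⊤ → U = ⊤ ∨ V = ⊤ := by
    intro U V h
    rcases hloc U with hU | hU
    · rcases hloc V with hV | hV
      · exact absurd (top_le_iff.1 (h ▸ sup_le hU hV)) hM₀
      · exact Or.inr hV
    · exact Or.inl hU
  have hP : ∃ v : P, v ≠ 0 := by
    by_contra! h
    exact hM₀ (eq_top_iff.2 fun x _ => by rw [h x]; exact zero_mem M₀)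
  have hopf : ∀ c : P →ₗ[R] P, LinearMap.range c = ⊤ → Function.Bijective c := by
    intro c hc
    have hcs := LinearMap.range_eq_top.1 hc
    refine ⟨?_, hcs⟩
    obtain ⟨s, hs⟩ := Module.projective_lifting_property c LinearMap.id hcs
    have hs' : ∀ x, c (s x) = x := fun x => LinearMap.congr_fun hs x
    rcases hsum (LinearMap.range s) (LinearMap.ker c) (eq_top_iff.2 fun x _ => by
      refine Submodule.mem_sup.2 ⟨s (c x), ⟨_, rfl⟩, x - s (c x), ?_, by abel⟩
      simp [hs']) with h | h
    · have hss := LinearMap.range_eq_top.1 h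
      intro x y hxy
      obtain ⟨x, rfl⟩ := hss x
      obtain ⟨y, rfl⟩ := hss y
      rw [hs', hs'] at hxy
      rw [hxy]
    · obtain ⟨v, hv⟩ := hP
      exact absurd (by rw [← hs' v]; exact LinearMap.mem_ker.1 (h ▸ Submodule.mem_top)) hv
  rcases hsum (LinearMap.range b) (LinearMap.range (LinearMap.id - b)) (eq_top_iff.2 fun x _ =>
    Submodule.mem_sup.2 ⟨b x, ⟨_, rfl⟩, x - b x, ⟨x, rfl⟩, by abel⟩) with h | h
  · exact Or.inl (hopf _ h)
  · exact Or.inr (hopf _ h)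

/-- The first cosyzygy of a projective module with local endomorphism ring is indecomposable,
provided the injective envelope is projective. -/
lemma indec_cosyzygy {P J : Type u} [AddCommGroup P] [AddCommGroup J]
    [Module R P] [Module R J] [hJ : Module.Injective R J] [Module.Projective R J]
    (ι : P →ₗ[R] J) (hι : Function.Injective ι)
    (hess : ∀ U : Submodule R J, U ≠ ⊥ → U ⊓ LinearMap.range ι ≠ ⊥)
    (hloc : ∀ b : P →ₗ[R] P, Function.Bijective b ∨ Function.Bijective (LinearMap.id - b : P →ₗ[R] P))
    {N : ModuleCat.{u} R} (ρ : J →ₗ[R] N) (hρ : Function.Surjective ρ)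
    (hex : ∀ y, ρ y = 0 ↔ ∃ v, ι v = y) (hN : ∃ x : N, x ≠ 0) : Indec R N := by
  refine ⟨fun h => ?_, fun U V hUV => ?_⟩
  · obtain ⟨x, hx⟩ := hN
    exact hx ((Submodule.mem_bot R).1 (h ▸ Submodule.mem_top))
  -- lift the projection onto `U` along `V` to `J`, and restrict the lift to `P`
  obtain ⟨ε, hεU, hεV⟩ : ∃ ε : N →ₗ[R] N, (∀ x, ε x ∈ U) ∧ (∀ x, x - ε x ∈ V) := by
    refine ⟨U.projection V hUV, fun x => ?_, fun x => ?_⟩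
    · exact Submodule.projection_apply_mem hUV x
    · rw [← Submodule.projection_eq_self_sub_projection]
      exact Submodule.projection_apply_mem hUV.symm x
  obtain ⟨a, ha⟩ := Module.projective_lifting_property ρ (ε ∘ₗ ρ) hρ
  have ha' : ∀ y, ρ (a y) = ε (ρ y) := fun y => LinearMap.congr_fun ha y
  obtain ⟨b, hb⟩ := exists_factor_inj ι hι (a ∘ₗ ι) fun v => (hex _).1 (by
    rw [LinearMap.comp_apply, ha', (hex (ι v)).2 ⟨v, rfl⟩, map_zero])
  rcases hloc b with h | h
  · right
    have hs := (bijective_of_envelope ι hι hess a b h fun v => (hb v).symm).2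
    have : U = ⊤ := eq_top_iff.2 fun x _ => by
      obtain ⟨y, rfl⟩ := hρ x
      obtain ⟨z, rfl⟩ := hs y
      rw [ha']; exact hεU _
    rw [eq_bot_iff, ← hUV.inf_eq_bot, this, top_inf_eq]
  · left
    have hs := (bijective_of_envelope ι hι hess (LinearMap.id - a) _ h fun v => by
      simp [hb]).2
    have : V = ⊤ := eq_top_iff.2 fun x _ => by
      obtain ⟨y, rfl⟩ := hρ x
      obtain ⟨z, rfl⟩ := hs y
      simp only [LinearMap.sub_apply, LinearMap.id_apply, map_sub, ha']; exact hεV _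
    rw [eq_bot_iff, ← hUV.inf_eq_bot, this, inf_top_eq]

/-- The almost split sequence. Here `𝔞 = R e` plays the role of `e'Ā`, and the sequence is the
pushout of `0 → P → J → N → 0` along a map `θ : P → I` whose kernel is the largest proper
submodule of `P`. The hypothesis `hext` says that `I` is injective relative to modules
annihilated by `𝔞`. -/
theorem isTauInv_core (𝔞 : Ideal R) [Module.Injective R 𝔞] (e : R) (he : e ∈ 𝔞)
    (hae : ∀ x ∈ 𝔞, x * e = x)
    {P J : Type u} [AddCommGroup P] [AddCommGroup J]
    [Module R P] [Module R J] [hJ : Module.Injective R J] [Module.Projective R P]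
    (M₀ : Submodule R P) (hM₀ : M₀ ≠ ⊤) (hloc : ∀ U : Submodule R P, U ≤ M₀ ∨ U = ⊤)
    (n : ℕ) (ε : P →ₗ[R] (Fin n → 𝔞)) (hε : Function.Injective ε)
    (ι : P →ₗ[R] J) (hι : Function.Injective ι)
    (hess : ∀ U : Submodule R J, U ≠ ⊥ → U ⊓ LinearMap.range ι ≠ ⊥)
    {N I : ModuleCat.{u} R} (ρ : J →ₗ[R] N) (hρ : Function.Surjective ρ)
    (hex : ∀ y, ρ y = 0 ↔ ∃ v, ι v = y)
    (hI : Indec R I) (hIa : ∀ x ∈ 𝔞, ∀ y : I, x • y = 0)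
    (hext : ∀ (X Y : Type u) [AddCommGroup X] [AddCommGroup Y] [Module R X] [Module R Y],
      (∀ x ∈ 𝔞, ∀ y : Y, x • y = 0) → ∀ (f : X →ₗ[R] Y), Function.Injective f →
        ∀ g : X →ₗ[R] I, ∃ h : Y →ₗ[R] I, ∀ x, h (f x) = g x)
    (θ : P →ₗ[R] I) (hθ : LinearMap.ker θ = M₀) : IsTauInv R I N := by
  have hFinj : Module.Injective R (Fin n → 𝔞) := inferInstance
  have hprojA : Module.Projective R 𝔞 := by
    refine Module.Projective.of_split (M := R) 𝔞.subtype
      ((LinearMap.toSpanSingleton R R e).codRestrict 𝔞 fun r => 𝔞.mul_mem_left r he) ?_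
    ext x
    exact hae x x.2
  have hFproj : Module.Projective R (Fin n → 𝔞) :=
    Module.Projective.of_equiv (DFinsupp.linearEquivFunOnFintype (M := fun _ : Fin n => 𝔞))
  -- `J` is a direct summand of `𝔞ⁿ`
  obtain ⟨a, ha⟩ := hFinj.out ι hι ε
  have hainj : Function.Injective a := injective_of_essential ι hess a fun v hv => by
    rw [ha] at hv
    rw [hε (hv.trans (map_zero ε).symm), map_zero]
  obtain ⟨r, hr⟩ := hJ.out a hainj LinearMap.id
  have hJproj : Module.Projective R J := Module.Projective.of_split a r (LinearMap.ext hr)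
  -- `𝔞` is idempotent, so there are no nonzero maps from `𝔞`, hence from `J`, to `I`
  have hhom : ∀ σ : J →ₗ[R] I, σ = 0 := by
    intro σ
    have h0 : σ ∘ₗ r = 0 := by
      refine LinearMap.pi_ext' fun i => LinearMap.ext fun x => ?_
      have hx : x = (x : R) • (⟨e, he⟩ : 𝔞) := Subtype.ext (hae x x.2).symm
      rw [hx, map_smul, map_smul, LinearMap.zero_comp, LinearMap.zero_apply, smul_zero]
      exact hIa x x.2 _
    ext y
    have := LinearMap.congr_fun h0 (a y)
    rwa [LinearMap.comp_apply, hr] at this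
  have hθ0 : ∃ v, θ v ≠ 0 := by
    by_contra! h
    exact hM₀ (hθ ▸ eq_top_iff.2 fun x _ => h x)
  have hθext : ∀ σ : J →ₗ[R] I, ¬ ∀ v, σ (ι v) = θ v := by
    intro σ h
    obtain ⟨v, hv⟩ := hθ0
    exact hv (by rw [← h, hhom σ]; rfl)
  have hN0 : ∃ x : N, x ≠ 0 := by
    by_contra! h
    obtain ⟨s, hs⟩ := exists_factor_inj ι hι LinearMap.id fun y => (hex y).1 (h _)
    exact hθext (θ ∘ₗ s) fun v => congrArg θ (hι (hs (ι v)))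
  have hNindec : Indec R N :=
    indec_cosyzygy ι hι hess (bijective_or_of_local M₀ hM₀ hloc) ρ hρ hex hN0
  -- the pushout `E`
  let κ : P →ₗ[R] I × J := θ.prod (-ι)
  let E : ModuleCat.{u} R := ModuleCat.of R ((I × J) ⧸ LinearMap.range κ)
  let mk : (I × J) →ₗ[R] E := (LinearMap.range κ).mkQ
  have hmk : ∀ z, mk z = 0 ↔ ∃ v, (θ v, -ι v) = z := fun z => by
    refine (Submodule.Quotient.mk_eq_zero (LinearMap.range κ)).trans ?_
    rfl
  have hmks : Function.Surjective mk := Submodule.mkQ_surjective _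
  obtain ⟨g, hg⟩ : ∃ g : E →ₗ[R] N, ∀ z, g (mk z) = ρ z.2 := by
    refine exists_factor_surj mk hmks (ρ ∘ₗ LinearMap.snd R I J) fun z hz => ?_
    obtain ⟨v, rfl⟩ := (hmk z).1 hz
    exact (hex _).2 ⟨-v, map_neg _ _⟩
  let f : I →ₗ[R] E := mk ∘ₗ LinearMap.inl R I J
  have hf : ∀ y, f y = mk (y, 0) := fun _ => rfl
  have hfinj : Function.Injective f := by
    rw [injective_iff_map_eq_zero]
    intro y hy
    obtain ⟨v, hv⟩ := (hmk _).1 hy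
    have h1 := congrArg Prod.fst hv
    have h2 := congrArg Prod.snd hv
    have h3 : v = 0 := hι (by rw [map_zero]; exact neg_eq_zero.1 h2)
    subst h3
    exact h1.symm.trans (map_zero θ)
  refine ⟨E, f, g, hfinj, ?_, ?_, hI, hNindec, ?_, ?_⟩
  · intro x
    obtain ⟨y, rfl⟩ := hρ x
    exact ⟨mk (0, y), hg _⟩
  · intro z
    obtain ⟨⟨y, x⟩, rfl⟩ := hmks z
    rw [hg]
    constructor
    · intro h
      obtain ⟨v, rfl⟩ := (hex x).1 h
      refine ⟨y + θ v, ?_⟩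
      rw [hf, ← sub_eq_zero, ← map_sub]
      exact (hmk _).2 ⟨v, by simp⟩
    · rintro ⟨y', hy'⟩
      rw [← hg, ← hy', hf, hg]
      exact map_zero ρ
  · -- a section of `g` would extend `θ` to `J`
    rintro ⟨s, hs⟩
    have hs' : ∀ x, g (s x) = x := fun x => LinearMap.congr_fun hs x
    obtain ⟨σ, hσ⟩ := exists_factor_inj f hfinj
      (mk ∘ₗ LinearMap.inr R I J - s ∘ₗ ρ) fun y => by
        obtain ⟨⟨y', x⟩, hz⟩ := hmks ((mk ∘ₗ LinearMap.inr R I J - s ∘ₗ ρ) y)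
        have h0 : ρ x = 0 := by
          have := congrArg g hz
          rw [hg] at this
          rw [this]
          simp only [LinearMap.sub_apply, LinearMap.comp_apply, map_sub, hg, hs',
            LinearMap.inr_apply, sub_self]
        obtain ⟨v, rfl⟩ := (hex x).1 h0
        refine ⟨y' + θ v, ?_⟩
        rw [← hz, hf, ← sub_eq_zero, ← map_sub]
        exact (hmk _).2 ⟨v, by simp⟩
    refine hθext σ fun v => hfinj ?_
    rw [hσ, hf, eq_comm, ← sub_eq_zero]
    simp only [LinearMap.sub_apply, LinearMap.comp_apply, LinearMap.inr_apply,
      (hex (ι v)).2 ⟨v, rfl⟩, map_zero, sub_zero]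
    rw [← map_sub]
    exact (hmk _).2 ⟨v, by simp⟩
  · intro W h hnot
    -- the pullback `Q` of `h` and `ρ`, with `P` embedded as the kernel of `Q → W`
    let Q : Submodule R (W × J) :=
      LinearMap.ker (h ∘ₗ LinearMap.fst R W J - ρ ∘ₗ LinearMap.snd R W J)
    have hQ : ∀ q : Q, h q.1.1 = ρ q.1.2 := fun q => sub_eq_zero.1 q.2
    let q₁ : Q →ₗ[R] W := LinearMap.fst R W J ∘ₗ Q.subtype
    let q₂ : Q →ₗ[R] J := LinearMap.snd R W J ∘ₗ Q.subtype
    have hq₁s : Function.Surjective q₁ := fun w => by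
      obtain ⟨y, hy⟩ := hρ (h w)
      exact ⟨⟨(w, y), sub_eq_zero.2 hy.symm⟩, rfl⟩
    let inc : P →ₗ[R] Q := (LinearMap.inr R W J ∘ₗ ι).codRestrict Q fun v => by
      have : ρ (ι v) = 0 := (hex _).2 ⟨v, rfl⟩
      simp [Q, this]
    have hinc₁ : ∀ v, q₁ (inc v) = 0 := fun _ => rfl
    have hinc₂ : ∀ v, q₂ (inc v) = ι v := fun _ => rfl
    have hker : ∀ q, q₁ q = 0 → ∃ v, inc v = q := by
      rintro ⟨⟨w, y⟩, hq⟩ (rfl : w = 0)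
      have : ρ y = 0 := by simpa using (hQ ⟨((0 : W), y), hq⟩).symm
      obtain ⟨v, rfl⟩ := (hex y).1 this
      exact ⟨v, rfl⟩
    -- the submodule `𝔞 Q`
    let T : Submodule R Q := Submodule.span R {q | ∃ x ∈ 𝔞, ∃ q', q = x • q'}
    have hT : ∀ x ∈ 𝔞, ∀ q : Q, x • q ∈ T := fun x hx q =>
      Submodule.subset_span ⟨x, hx, q, rfl⟩
    have hcases : (∀ v, inc v ∈ T → v ∈ M₀) ∨ ∀ v, inc v ∈ T := by
      rcases hloc (T.comap inc) with h | h
      · exact Or.inl fun v hv => h hv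
      · exact Or.inr fun v => by
          have : v ∈ T.comap inc := h ▸ Submodule.mem_top
          exact this
    rcases hcases with hsmall | hbig
    · -- `θ` extends to `ψ : Q → I`, which gives the lift of `h`
      obtain ⟨ψ, hψ⟩ : ∃ ψ : Q →ₗ[R] I, ∀ v, ψ (inc v) = θ v := by
        let φ : P →ₗ[R] Q ⧸ T := T.mkQ ∘ₗ inc
        have hφ : ∀ v, φ v = 0 → θ v = 0 := fun v hv => by
          have : v ∈ M₀ := hsmall v ((Submodule.Quotient.mk_eq_zero T).1 hv)
          rw [← hθ] at this
          exact this
        obtain ⟨ψ, hψ⟩ := hext (P ⧸ LinearMap.ker φ) (Q ⧸ T)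
          (fun x hx y => by
            obtain ⟨q, rfl⟩ := Submodule.mkQ_surjective T y
            rw [← map_smul]
            exact (Submodule.Quotient.mk_eq_zero T).2 (hT x hx q))
          ((LinearMap.ker φ).liftQ φ le_rfl)
          (LinearMap.ker_eq_bot.1 (Submodule.ker_liftQ_eq_bot _ _ _ le_rfl))
          ((LinearMap.ker φ).liftQ θ fun v hv => hφ v hv)
        exact ⟨ψ ∘ₗ T.mkQ, fun v => hψ ((LinearMap.ker φ).mkQ v)⟩
      obtain ⟨u, hu⟩ := exists_factor_surj q₁ hq₁s (mk ∘ₗ (-ψ).prod q₂) fun q hq => by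
        obtain ⟨v, rfl⟩ := hker q hq
        refine (hmk _).2 ⟨-v, ?_⟩
        simp [hψ, hinc₂]
      refine ⟨u, LinearMap.ext fun w => ?_⟩
      obtain ⟨q, rfl⟩ := hq₁s w
      rw [LinearMap.comp_apply, hu, LinearMap.comp_apply, hg]
      exact (hQ q).symm
    · -- `P ⊆ 𝔞 Q`: then `h` is a split epimorphism
      exfalso
      obtain ⟨x, hx⟩ : ∃ x, x ∉ M₀ := by
        by_contra! h'
        exact hM₀ (eq_top_iff.2 fun x _ => h' x)
      have hspan : Submodule.span R {x} = ⊤ := (hloc _).resolve_left fun h' =>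
        hx (h' (Submodule.mem_span_singleton_self x))
      obtain ⟨m, c, s, hcs⟩ := Submodule.mem_span_set'.1 (hbig x)
      choose z hz q' hq' using fun i => (s i).2
      let β : (Fin m → 𝔞) →ₗ[R] Q :=
        LinearMap.lsum R (fun _ : Fin m => 𝔞) ℕ fun i =>
          (LinearMap.toSpanSingleton R Q (q' i)) ∘ₗ 𝔞.subtype
      have hβ : ∀ v, β v = ∑ i, (v i : R) • q' i := fun v => by
        simp [β, LinearMap.lsum_apply]
      have hβx : β (fun i => ⟨c i * z i, 𝔞.mul_mem_left _ (hz i)⟩) = inc x := by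
        rw [hβ, ← hcs]
        refine Finset.sum_congr rfl fun i _ => ?_
        rw [hq' i, mul_smul]
      -- lift `P → 𝔞 Q` to `𝔞ᵐ` and extend the lift to `J`
      have hr : ∀ v, inc v ∈ LinearMap.range β := fun v => by
        obtain ⟨t, rfl⟩ := Submodule.mem_span_singleton.1
          (hspan ▸ Submodule.mem_top : v ∈ Submodule.span R {x})
        rw [map_smul]
        exact Submodule.smul_mem _ _ ⟨_, hβx⟩
      obtain ⟨δ, hδ⟩ := Module.projective_lifting_property β.rangeRestrict
        (inc.codRestrict _ hr) β.surjective_rangeRestrict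
      have hδ' : ∀ v, β (δ v) = inc v := fun v =>
        congrArg Subtype.val (LinearMap.congr_fun hδ v)
      have hFm : Module.Injective R (Fin m → 𝔞) := inferInstance
      obtain ⟨α, hα⟩ := hFm.out ι hι δ
      have hαβ : ∀ v, β (α (ι v)) = inc v := fun v => by rw [hα, hδ']
      have hγ : Function.Bijective (q₂ ∘ₗ β ∘ₗ α) :=
        bijective_of_envelope ι hι hess _ LinearMap.id Function.bijective_id fun v => by
          simp only [LinearMap.comp_apply, hαβ, hinc₂, LinearMap.id_apply]
      let γ := LinearEquiv.ofBijective _ hγ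
      have hγι : ∀ v, γ.symm (ι v) = ι v := fun v => by
        rw [LinearEquiv.symm_apply_eq]
        exact (by simp only [LinearMap.comp_apply, hαβ, hinc₂] :
          ι v = (q₂ ∘ₗ β ∘ₗ α) (ι v))
      obtain ⟨t, ht⟩ := exists_factor_surj ρ hρ (q₁ ∘ₗ β ∘ₗ α ∘ₗ γ.symm.toLinearMap)
        fun y hy => by
          obtain ⟨v, rfl⟩ := (hex y).1 hy
          simp only [LinearMap.comp_apply, LinearEquiv.coe_coe, hγι, hαβ, hinc₁]
      refine hnot ⟨t, LinearMap.ext fun w => ?_⟩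
      obtain ⟨y, rfl⟩ := hρ w
      rw [LinearMap.comp_apply, ht]
      refine (hQ (β (α (γ.symm y)))).trans ?_
      exact congrArg ρ (γ.apply_symm_apply y)

end Core

/-! ### Restriction along a ring surjection -/

section ChangeOfRings

variable {R B : Type u} [Ring R] [Ring B] (π : R →+* B)

/-- An injective `B`-module is injective relative to the `R`-modules annihilated by `ker π`,
since those are exactly the restrictions of `B`-modules along the surjection `π`. -/
lemma extension_of_annihilated (hπ : Function.Surjective π) (I : ModuleCat.{u} B)
    [hI : Module.Injective B I] (X Y : Type u) [AddCommGroup X] [AddCommGroup Y] [Module R X]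
    [Module R Y] (hY : ∀ x ∈ RingHom.ker π, ∀ y : Y, x • y = 0) (f : X →ₗ[R] Y)
    (hf : Function.Injective f) (g : X →ₗ[R] (ModuleCat.restrictScalars π).obj I) :
    ∃ h : Y →ₗ[R] (ModuleCat.restrictScalars π).obj I, ∀ x, h (f x) = g x := by
  have hX : ∀ x ∈ RingHom.ker π, ∀ y : X, x • y = 0 := fun x hx y =>
    hf (by rw [map_smul, hY x hx, map_zero])
  choose s hs using hπ
  have key : ∀ (Z : Type u) [AddCommGroup Z] [Module R Z],
      (∀ x ∈ RingHom.ker π, ∀ y : Z, x • y = 0) → ∀ r r', π r = π r' → ∀ y : Z,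
        r • y = r' • y := by
    intro Z _ _ hZ r r' h y
    rw [← sub_eq_zero, ← sub_smul]
    exact hZ _ (by rw [RingHom.mem_ker, map_sub, h, sub_self]) y
  let mod : ∀ (Z : Type u) [AddCommGroup Z] [Module R Z],
      (∀ x ∈ RingHom.ker π, ∀ y : Z, x • y = 0) → Module B Z := fun Z _ _ hZ =>
    { smul := fun b z => s b • z
      one_smul := fun z => (key Z hZ _ 1 (by simp [hs]) z).trans (one_smul R z)
      mul_smul := fun b c z => (key Z hZ _ (s b * s c) (by simp [hs]) z).trans (mul_smul _ _ z)
      smul_zero := fun b => smul_zero (s b)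
      smul_add := fun b => smul_add (s b)
      add_smul := fun b c z => (key Z hZ _ (s b + s c) (by simp [hs]) z).trans (add_smul _ _ z)
      zero_smul := fun z => (key Z hZ _ 0 (by simp [hs]) z).trans (zero_smul R z) }
  let : Module B X := mod X hX
  let : Module B Y := mod Y hY
  have hg : ∀ (r : R) x, g (r • x) = (π r • (g x : I) : I) := fun r x => g.map_smul r x
  let fB : X →ₗ[B] Y := ⟨f.toAddHom, fun b x => f.map_smul (s b) x⟩
  let gB : X →ₗ[B] I := ⟨g.toAddHom, fun b x => (hg (s b) x).trans (by rw [hs]; rfl)⟩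
  obtain ⟨h, hh⟩ := hI.out fB hf gB
  have hhs : ∀ (r : R) (y : Y), h (r • y) = (π r • h y : I) := fun r y => by
    rw [← h.map_smul]
    exact congrArg h (key Y hY r (s (π r)) (hs _).symm y)
  exact ⟨⟨h.toAddHom, hhs⟩, hh⟩

/-- Along a surjection, submodules of the restriction of `M` are submodules of `M`. -/
def toSubmodule (hπ : Function.Surjective π) {M : ModuleCat.{u} B}
    (U : Submodule R ((ModuleCat.restrictScalars π).obj M)) : Submodule B M where
  carrier := {x | (show (ModuleCat.restrictScalars π).obj M from x) ∈ U}
  add_mem' := fun ha hb => U.add_mem ha hb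
  zero_mem' := U.zero_mem
  smul_mem' := fun b x hx => by
    obtain ⟨r, rfl⟩ := hπ b
    exact U.smul_mem r hx

/-- The injective envelope of a simple module has simple socle, hence stays indecomposable
after restriction along a surjection. -/
lemma indec_restrict (hπ : Function.Surjective π) (S I : ModuleCat.{u} B)
    (hS : IsSimpleModule B S) (j : S →ₗ[B] I) (hI : IsInjEnvelope B S I j) :
    Indec R ((ModuleCat.restrictScalars π).obj I) := by
  obtain ⟨-, hj, hess⟩ := hI
  have := hS.nontrivial
  obtain ⟨s₀, hs₀⟩ := exists_ne (0 : S)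
  have hjs : j s₀ ≠ 0 := fun h => hs₀ (hj (h.trans (map_zero j).symm))
  refine ⟨fun h => hjs ?_, fun U V hUV => ?_⟩
  · have : (show (ModuleCat.restrictScalars π).obj I from j s₀) ∈
        (⊥ : Submodule R ((ModuleCat.restrictScalars π).obj I)) := h ▸ Submodule.mem_top
    exact this
  -- every nonzero submodule contains the socle `j S`
  have hsoc : ∀ W : Submodule R ((ModuleCat.restrictScalars π).obj I), W ≠ ⊥ →
      (show (ModuleCat.restrictScalars π).obj I from j s₀) ∈ W := by
    intro W hW
    obtain ⟨w, hw, hw0⟩ := Submodule.exists_mem_ne_zero_of_ne_bot hW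
    have h1 : toSubmodule π hπ W ≠ ⊥ := fun h => hw0
      ((Submodule.mem_bot B).1 (h ▸ hw : (show I from w) ∈ (⊥ : Submodule B I)))
    obtain ⟨_, ⟨hx, s, rfl⟩, hx0⟩ := Submodule.exists_mem_ne_zero_of_ne_bot (hess _ h1)
    rcases eq_bot_or_eq_top ((toSubmodule π hπ W).comap j) with h | h
    · have : s ∈ (toSubmodule π hπ W).comap j := hx
      rw [h, Submodule.mem_bot] at this
      exact absurd (by rw [this, map_zero]) hx0
    · exact (h ▸ Submodule.mem_top : s₀ ∈ (toSubmodule π hπ W).comap j)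
  by_contra! h
  have : (show (ModuleCat.restrictScalars π).obj I from j s₀) ∈ U ⊓ V :=
    ⟨hsoc U h.1, hsoc V h.2⟩
  rw [hUV.inf_eq_bot] at this
  exact hjs this

/-- The theorem for a ring surjection `π : R → B` whose kernel `R e` is an injective left ideal
containing a finite family `w` with annihilator `ker π`, so that `B` embeds in `(R e)ⁿ`. -/
theorem isTauInv_of_surjective (hπ : Function.Surjective π)
    [Module.Injective R (RingHom.ker π)] (e : R) (he : e ∈ RingHom.ker π)
    (hae : ∀ x ∈ RingHom.ker π, x * e = x) (n : ℕ) (w : Fin n → RingHom.ker π)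
    (hw : ∀ x : R, (∀ i, x * (w i : R) = 0) ↔ x ∈ RingHom.ker π)
    (S : ModuleCat.{u} B) (hS : IsSimpleModule B S)
    (P : ModuleCat.{u} B) (p : P →ₗ[B] S) (hP : IsProjCover B P S p)
    (I : ModuleCat.{u} B) (j : S →ₗ[B] I) (hI : IsInjEnvelope B S I j) (N : ModuleCat.{u} R)
    (hN : IsCosyzygy R ((ModuleCat.restrictScalars π).obj P) N) :
    IsTauInv R ((ModuleCat.restrictScalars π).obj I) N := by
  obtain ⟨J, ι, ⟨hJ, hι, hess⟩, ⟨iso⟩⟩ := hN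
  obtain ⟨hPproj, hp, hsmall⟩ := hP
  have hSnt := hS.nontrivial
  have hIinj : Module.Injective B I := hI.1
  let P' := (ModuleCat.restrictScalars π).obj P
  let I' := (ModuleCat.restrictScalars π).obj I
  let θ : P' →ₗ[R] I' := ⟨(j ∘ₗ p).toAddHom, fun r x => (j ∘ₗ p).map_smul (π r) x⟩
  have hθ : ∀ x : P, θ x = 0 ↔ p x = 0 := fun x =>
    ⟨fun h => hI.2.1 (h.trans (map_zero j).symm), fun h => (congrArg j h).trans (map_zero j)⟩
  have hθtop : LinearMap.ker θ ≠ ⊤ := by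
    obtain ⟨s, hs⟩ := exists_ne (0 : S)
    obtain ⟨x, rfl⟩ := hp s
    exact fun h => hs ((hθ x).1 (h ▸ Submodule.mem_top : (show P' from x) ∈ LinearMap.ker θ))
  -- the kernel of `P → S` is the largest proper submodule of `P`
  have hloc : ∀ U : Submodule R P', U ≤ LinearMap.ker θ ∨ U = ⊤ := by
    intro U
    rcases eq_bot_or_eq_top ((toSubmodule π hπ U).map p) with h | h
    · left
      intro x hx
      refine (hθ x).2 ?_
      have : p x ∈ (toSubmodule π hπ U).map p := ⟨x, hx, rfl⟩
      rwa [h, Submodule.mem_bot] at this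
    · right
      have := hsmall (toSubmodule π hπ U) (eq_top_iff.2 fun x _ => by
        obtain ⟨y, hy, hyx⟩ := (h ▸ Submodule.mem_top : p x ∈ (toSubmodule π hπ U).map p)
        exact Submodule.mem_sup.2 ⟨y, hy, x - y, by simp [hyx], by abel⟩)
      exact eq_top_iff.2 fun x _ =>
        (this ▸ Submodule.mem_top : (show P from x) ∈ toSubmodule π hπ U)
  -- `P` is cyclic, hence a direct summand of `B`, which is the summand `R (1 - e)` of `R`
  obtain ⟨x, hx⟩ : ∃ x : P', x ∉ LinearMap.ker θ := by
    by_contra! h'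
    exact hθtop (eq_top_iff.2 fun x _ => h' x)
  have hspan : Submodule.span R {x} = ⊤ := (hloc _).resolve_left fun h' =>
    hx (h' (Submodule.mem_span_singleton_self x))
  let x₀ : P := x
  obtain ⟨s, hs⟩ := Module.projective_lifting_property
    (LinearMap.toSpanSingleton B P x₀) LinearMap.id fun v => by
      obtain ⟨t, rfl⟩ := Submodule.mem_span_singleton.1
        (hspan ▸ Submodule.mem_top : (show P' from v) ∈ Submodule.span R {x})
      exact ⟨π t, rfl⟩
  have hs' : ∀ v : P, s v • x₀ = v := fun v => LinearMap.congr_fun hs v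
  choose l hl using hπ
  have hl1 : ∀ r r', π r = π r' → r * (1 - e) = r' * (1 - e) := fun r r' h => by
    have := hae (r - r') (by rw [RingHom.mem_ker, map_sub, h, sub_self])
    rw [sub_mul, sub_eq_sub_iff_add_eq_add] at this
    rw [mul_sub, mul_sub, mul_one, mul_one, sub_eq_sub_iff_add_eq_add, add_comm r', ← this,
      add_comm]
  let σ : P' →ₗ[R] R :=
    { toFun := fun v => l (s v) * (1 - e)
      map_add' := fun v v' => by
        rw [← add_mul]
        refine hl1 _ _ ?_
        rw [map_add, hl, hl, hl]
        exact map_add s _ _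
      map_smul' := fun r v => by
        rw [RingHom.id_apply, smul_eq_mul, ← mul_assoc]
        refine hl1 _ _ ?_
        rw [map_mul, hl, hl]
        exact s.map_smul (π r) v }
  have hσ : ∀ v : P, π (σ v) = s v := fun v => by
    change π (l (s v) * (1 - e)) = s v
    rw [map_mul, map_sub, RingHom.mem_ker.1 he, hl, map_one, sub_zero, mul_one]
  have hPproj' : Module.Projective R P' := by
    refine Module.Projective.of_split σ (LinearMap.toSpanSingleton R P' x) ?_
    refine LinearMap.ext fun v => ?_
    change (π (σ v) • x₀ : P) = v
    exact (congrArg (· • x₀) (hσ v)).trans (hs' v)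
  let ε : P' →ₗ[R] (Fin n → RingHom.ker π) :=
    LinearMap.pi fun i => (LinearMap.toSpanSingleton R (RingHom.ker π) (w i)) ∘ₗ σ
  have hε : Function.Injective ε := by
    rw [injective_iff_map_eq_zero]
    intro v hv
    have h1 : σ v ∈ RingHom.ker π := (hw _).1 fun i =>
      congrArg Subtype.val (congrFun hv i)
    have h2 : s v = 0 := (hσ v).symm.trans h1
    exact (hs' v).symm.trans (by rw [h2, zero_smul]; rfl)
  refine isTauInv_core (RingHom.ker π) e he hae (LinearMap.ker θ) hθtop hloc n ε hε ι hι hess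
    (iso.symm.toLinearMap ∘ₗ (LinearMap.range ι).mkQ)
    (iso.symm.surjective.comp (Submodule.mkQ_surjective _)) (fun y => ?_)
    (indec_restrict π (fun b => ⟨l b, hl b⟩) S I hS j hI) (fun r hr y => ?_)
    (fun X Y _ _ _ _ hY f hf g =>
      extension_of_annihilated π (fun b => ⟨l b, hl b⟩) I X Y hY f hf g) θ rfl
  · exact iso.symm.map_eq_zero_iff.trans (Submodule.Quotient.mk_eq_zero _)
  · change (π r • (show I from y) : I) = 0
    rw [RingHom.mem_ker.1 hr, zero_smul]

end ChangeOfRings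

/-! ### The duplicated algebra -/

section Duplicated

variable (k : Type u) [Field k] (A : Type u) [Ring A] [Algebra k A]

lemma dualModL_apply (a b z : A) (q : Module.Dual k A) : ((a, b) • q) z = q (z * b) := rfl

lemma dualModR_apply (a b z : A) (q : Module.Dual k A) :
    (MulOpposite.op (a, b) • q) z = q (a * z) := rfl

lemma snd_mul_apply (x y : Dup k A) (z : A) :
    (x * y).snd z = y.snd (z * x.fst.2) + x.snd (y.fst.1 * z) := by
  rw [TrivSqZeroExt.snd_mul]; rfl

/-- The ideal `e'Ā` of `Ā`, a left ideal of `Āᵐᵒᵖ`: the kernel of `Ā → A`. -/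
noncomputable abbrev dupIdeal : Ideal (Dup k A)ᵐᵒᵖ := RingHom.ker (RingHom.op (dupProj₁ k A))

lemma mem_dupIdeal (x : (Dup k A)ᵐᵒᵖ) : x ∈ dupIdeal k A ↔ x.unop.fst.1 = 0 := by
  rw [RingHom.mem_ker]
  exact MulOpposite.op_eq_zero_iff _

/-- The module `e'Ā` is injective. A map `φ : X → e'Ā` is determined by the functional
`x ↦ (DA-component of φ x) 1`, and every `k`-linear functional on a right `Ā`-module arises in
this way, so that extending module maps along `X → Y` amounts to extending functionals. -/
theorem dupIdeal_injective [FiniteDimensional k A] :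
    Module.Injective (Dup k A)ᵐᵒᵖ (dupIdeal k A) := by
  refine ⟨fun X Y _ _ _ _ f hf φ => ?_⟩
  let c : k →+* (Dup k A)ᵐᵒᵖ :=
    { toFun := fun r => MulOpposite.op (inl (algebraMap k A r, algebraMap k A r))
      map_one' := by simp; rfl
      map_mul' := fun r s => by
        rw [← MulOpposite.op_mul, ← inl_mul, mul_comm r s]; simp
      map_zero' := by simp; rfl
      map_add' := fun r s => by
        rw [← MulOpposite.op_add, ← inl_add]; simp }
  let : Module k X := Module.compHom X c
  let : Module k Y := Module.compHom Y c
  have hcX : ∀ (r : k) (x : X), r • x = c r • x := fun _ _ => rfl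
  have hcY : ∀ (r : k) (y : Y), r • y = c r • y := fun _ _ => rfl
  let fk : X →ₗ[k] Y := ⟨f.toAddHom, fun r x => f.map_smul (c r) x⟩
  obtain ⟨g, hg⟩ := fk.exists_leftInverse_of_injective (LinearMap.ker_eq_bot.2 hf)
  have hgf : ∀ x, g (f x) = x := fun x => LinearMap.congr_fun hg x
  -- the functional attached to `φ`
  let φ' : X → Dup k A := fun x => (φ x : (Dup k A)ᵐᵒᵖ).unop
  have hφ0 : ∀ x, (φ' x).fst.1 = 0 := fun x => (mem_dupIdeal k A _).1 (φ x).2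
  have hφadd : ∀ x x', φ' (x + x') = φ' x + φ' x' := fun x x' => by simp [φ']
  have hφmul : ∀ (r : Dup k A) x, φ' (MulOpposite.op r • x) = φ' x * r := fun r x => by
    simp [φ']
  let lam : X →ₗ[k] k :=
    { toFun := fun x => (φ' x).snd 1
      map_add' := fun x x' => by rw [hφadd]; rfl
      map_smul' := fun r x => by
        rw [hcX]
        change (φ' (MulOpposite.op _ • x)).snd 1 = _
        rw [hφmul, snd_mul_apply]
        simp [Algebra.algebraMap_eq_smul_one] }
  let μ : Y →ₗ[k] k := lam ∘ₗ g
  have hμ : ∀ x, μ (f x) = (φ' x).snd 1 := fun x => by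
    change lam (g (f x)) = _
    rw [hgf]; rfl
  -- the two components of the extension
  let q : Y → Module.Dual k A := fun y =>
    { toFun := fun z => μ ((MulOpposite.op (inl (z, 0)) : (Dup k A)ᵐᵒᵖ) • y)
      map_add' := fun z z' => by
        rw [← map_add, ← add_smul, ← MulOpposite.op_add, ← inl_add]; simp
      map_smul' := fun r z => by
        rw [RingHom.id_apply, ← map_smul, hcY, ← mul_smul]
        congr 2
        change MulOpposite.op (inl (r • z, 0)) = MulOpposite.op
          ((inl (z, 0) : Dup k A) * inl (algebraMap k A r, algebraMap k A r))
        rw [← inl_mul]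
        simp [Algebra.smul_def, Algebra.commutes r z] }
  let d : Y → Module.Dual k (Module.Dual k A) := fun y =>
    { toFun := fun t => μ ((MulOpposite.op (inr t) : (Dup k A)ᵐᵒᵖ) • y)
      map_add' := fun z z' => by
        rw [← map_add, ← add_smul, ← MulOpposite.op_add, ← inr_add]
      map_smul' := fun r t => by
        rw [RingHom.id_apply, ← map_smul, hcY, ← mul_smul]
        congr 2
        change MulOpposite.op (inr (r • t)) = MulOpposite.op
          ((inr t : Dup k A) * inl (algebraMap k A r, algebraMap k A r))
        rw [inr_mul_inl]
        congr 2
        ext z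
        rw [dualModR_apply]
        simp [← Algebra.smul_def] }
  let a : Y → A := fun y => (Module.evalEquiv k A).symm (d y)
  have hq : ∀ y z, q y z = μ ((MulOpposite.op (inl (z, 0)) : (Dup k A)ᵐᵒᵖ) • y) :=
    fun _ _ => rfl
  have ha : ∀ y (t : Module.Dual k A),
      t (a y) = μ ((MulOpposite.op (inr t) : (Dup k A)ᵐᵒᵖ) • y) := fun y t => by
    have : Module.evalEquiv k A (a y) t = d y t := by simp [a]
    exact this
  have hsep : ∀ b b' : A, (∀ t : Module.Dual k A, t b = t b') → b = b' := fun b b' h =>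
    (Module.evalEquiv k A).injective (LinearMap.ext h)
  obtain ⟨ψ, hψ1, hψ2⟩ : ∃ ψ : Y → Dup k A,
      (∀ y, (ψ y).fst = (0, a y)) ∧ ∀ y, (ψ y).snd = q y :=
    ⟨fun y => inl (0, a y) + inr (q y), fun y => by simp, fun y => by simp⟩
  have hψadd : ∀ y y', ψ (y + y') = ψ y + ψ y' := fun y y' => by
    refine TrivSqZeroExt.ext ?_ ?_
    · rw [fst_add, hψ1, hψ1, hψ1, Prod.mk_add_mk, add_zero]
      refine congrArg _ (hsep _ _ fun t => ?_)
      rw [map_add, ha, ha, ha, smul_add, map_add]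
    · rw [snd_add, hψ2, hψ2, hψ2]
      ext z
      rw [LinearMap.add_apply, hq, hq, hq, smul_add, map_add]
  have hψmul : ∀ (r : Dup k A) y, ψ (MulOpposite.op r • y) = ψ y * r := fun r y => by
    refine TrivSqZeroExt.ext ?_ ?_
    · rw [fst_mul, hψ1, hψ1]
      refine Prod.ext (by simp) (hsep _ _ fun t => ?_)
      change t (a _) = t (a y * r.fst.2)
      rw [ha, ← mul_smul, ← dualModL_apply k A r.fst.1, ha]
      congr 2
      change MulOpposite.op (_ * _) = _
      congr 1
      refine TrivSqZeroExt.ext ?_ ?_ <;> simp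
    · ext z
      rw [snd_mul_apply, hψ1, hψ2, hψ2, hq, hq]
      change _ = r.snd (z * a y) + _
      rw [← dualModR_apply k A z 0, ha, ← map_add, ← add_smul, ← mul_smul]
      congr 2
      change MulOpposite.op (r * inl (z, 0)) = MulOpposite.op
        (inr (MulOpposite.op (z, (0 : A)) • r.snd) + inl (r.fst.1 * z, 0))
      congr 1
      refine TrivSqZeroExt.ext ?_ ?_
      · rw [fst_mul, fst_add, fst_inr, fst_inl, fst_inl]
        exact Prod.ext (zero_add _).symm (by simp)
      · simp
  refine ⟨⟨⟨fun y => ⟨MulOpposite.op (ψ y), (mem_dupIdeal k A _).2 (by simp [hψ1])⟩,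
    fun y y' => Subtype.ext ?_⟩, fun r y => Subtype.ext ?_⟩, fun x => Subtype.ext ?_⟩
  · exact congrArg MulOpposite.op (hψadd y y')
  · exact congrArg MulOpposite.op (hψmul r.unop y)
  · refine MulOpposite.unop_injective ?_
    change ψ (f x) = φ' x
    refine TrivSqZeroExt.ext ?_ ?_
    · rw [hψ1]
      refine Prod.ext (hφ0 x).symm (hsep _ _ fun t => ?_)
      change t (a _) = _
      rw [ha, ← map_smul, hμ, hφmul, snd_mul_apply]
      simp
    · rw [hψ2]
      ext z
      rw [hq, ← map_smul, hμ, hφmul, snd_mul_apply]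
      simp

end Duplicated

/-- For every vertex `x` of `Q_A` (encoded by a simple right A-module
`S = S_x` with projective cover `P = P_x` and injective envelope `I = I_x` over `A`), the
first cosyzygy over the duplicated algebra Ā of `P_x` is isomorphic to the inverse
Auslander-Reiten translate of `I_x`:  `Ω_Ā⁻¹ P_x ≅ τ_Ā⁻¹ I_x`. -/
theorem cosyzygy_of_projective_is_tau_inv_of_injective
    (k A : Type u) [Field k] [IsAlgClosed k] [Ring A] [Algebra k A]
    [FiniteDimensional k A] (hA : IsHereditaryRing Aᵐᵒᵖ)
    (S : ModuleCat.{u} Aᵐᵒᵖ) (hS : IsSimpleModule Aᵐᵒᵖ S)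
    (P : ModuleCat.{u} Aᵐᵒᵖ) (p : P →ₗ[Aᵐᵒᵖ] S) (hP : IsProjCover Aᵐᵒᵖ P S p)
    (I : ModuleCat.{u} Aᵐᵒᵖ) (j : S →ₗ[Aᵐᵒᵖ] I) (hI : IsInjEnvelope Aᵐᵒᵖ S I j) :
    ∀ N : ModuleCat.{u} (Dup k A)ᵐᵒᵖ,
      IsCosyzygy (Dup k A)ᵐᵒᵖ ((resA k A).obj P) N →
      IsTauInv (Dup k A)ᵐᵒᵖ ((resA k A).obj I) N := by
  intro N hN
  have := dupIdeal_injective k A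
  let b := Module.finBasis k A
  refine isTauInv_of_surjective (RingHom.op (dupProj₁ k A))
    (fun x => ⟨MulOpposite.op (inl (x.unop, 0)), rfl⟩)
    (MulOpposite.op (eDup' k A)) ((mem_dupIdeal k A _).2 rfl) (fun x hx => ?_) _
    (fun i => ⟨MulOpposite.op (inr (b.coord i)), (mem_dupIdeal k A _).2 rfl⟩) (fun x => ?_)
    S hS P p hP I j hI N hN
  · -- `e' x = x` for `x ∈ e'Ā`
    have h0 := (mem_dupIdeal k A x).1 hx
    refine MulOpposite.unop_injective ?_
    change eDup' k A * x.unop = x.unop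
    refine TrivSqZeroExt.ext (Prod.ext ?_ ?_) (LinearMap.ext fun z => ?_)
    · simp [h0, eDup']
    · simp [eDup']
    · rw [snd_mul_apply]
      simp [eDup']
  · -- the coordinate functionals `b i ∈ DA` separate the points of `A`
    rw [mem_dupIdeal]
    constructor
    · intro h
      refine b.ext_elem fun i => ?_
      have h1 : (inr (b.coord i) : Dup k A) * x.unop = 0 :=
        congrArg MulOpposite.unop (h i)
      have h2 := congrArg (fun y : Dup k A => y.snd 1) h1
      simp only [snd_mul_apply] at h2
      simpa using h2
    · intro h i
      refine MulOpposite.unop_injective ?_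
      change (inr (b.coord i) : Dup k A) * x.unop = 0
      refine TrivSqZeroExt.ext (by simp) (LinearMap.ext fun z => ?_)
      rw [snd_mul_apply]
      simp [h]
end
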